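/- For all integers m ≥ 3 and k ≥ 2, the higher topological complexity of the three-dimensional lens space satisfies TC_k(L^3_m) = 3k, where L^3_m = L^{2n+1}_m with n = 1. -/

import Mathlib

/-!
**Lower bound.** Let `r` open sets with sections cover the `k`-th power of the lens space. On the
preimage of such a set in `(S³)ᵏ` the paths given by the section lift to `S³`, starting at one
chosen coordinate; each of the other `k - 1` coordinates then differs from the corresponding point
of the lifted path by an `m`-th root of unity. This yields locally constant labels in
`(ZMod m)^(k-1)`: rotating an ordinary coordinate by `exp (2 π i / m)` adds a basis vector to the
label, rotating the last one subtracts all of them (`exists_label`).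

Join coordinates parametrize `(S³)ᵏ` by `ℝ^(3k)`, and a fine cubical lattice has every cell inside
a member of the cover; the first such member is the color of the cell. Iterated coning, with the
label of a cell as cone point, turns the labels into an equivariant chain map `phi` from the cubical
chains to the `(k-1)`-fold tensor power of the periodic resolution of `ZMod m`. It kills every cell
whose color is smaller than its dimension, because the cone over a cone with the same cone point
vanishes (`phi_vanish`). Summing over the lattice cells of the standard cells of the sphere gives a
family indexed by the multidegrees in `{0, …, 3}ᵏ` that satisfies the relations of a chain map from
the `k`-fold tensor power of the periodic resolution (`fam_rel`). If `r < 3k`, it vanishes in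
multidegree `(3, …, 3, 2)`, of dimension `3k - 1`. On the other hand `alg_main` shows, by
eliminating the factors one at a time, that this vanishing forces `2 = 0` in `ZMod m`, which fails
for `m ≥ 3`. The minus sign responsible for the `2` comes from the last factor moving the labels
backwards.

**Upper bound.** `3k` open sets are indexed by parameters `(φ i, ρ i)`. On the `i`-th one, each point
`(x₀, x₁)` of `S³` is pushed to one of the two core circles according to whether `|x₀|² > ρ i` or
`|x₀|² < ρ i`; then it is turned along that circle, by an `m`-th root of a complex number in the slit
plane, until its `m`-th power and that of the first coordinate differ by a fixed constant; finally it
follows a fixed path (`stages`). These homotopies descend to the lens space and end at a common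
point, hence give a section (`hasSec_of_homotopies`). The `i`-th set misses a tuple only if
`|x₀|² = ρ i` for a coordinate, which excludes at most `k` indices, or if `φ i` is, modulo integers,
a difference of two of the `2k` normalized arguments of the coordinates. As `1` and the `φ i` are
linearly independent over `ℚ`, the latter happens for at most `2k - 1` indices (`card_bound`), so one
of the `3k` sets contains the tuple (`cover_Wset`).
-/

open scoped unitInterval

/-- The map `π_k : C([0,1],X) → X^k`, `γ ↦ (γ(0), γ(1/(k-1)), …, γ(1))`. -/
noncomputable def pik {X : Type*} [TopologicalSpace X] (k : ℕ) (γ : C(unitInterval, X)) :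
    Fin k → X :=
  fun i => γ (Set.projIcc 0 1 zero_le_one ((i : ℝ) / ((k : ℝ) - 1)))

/-- The restriction of `π_k` over `S ⊆ X^k` admits a continuous section. -/
def HasSec {X : Type*} [TopologicalSpace X] (k : ℕ) (S : Set (Fin k → X)) : Prop :=
  ∃ s : C(S, C(unitInterval, X)), ∀ u : S, pik k (s u) = (u : Fin k → X)

/-- The inclusion of `U` into `Z` is null-homotopic. -/
def NullHomotopicIncl {Z : Type*} [TopologicalSpace Z] (U : Set Z) : Prop :=
  ∃ z : Z, ContinuousMap.Homotopic ⟨Subtype.val, continuous_subtype_val⟩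
    (ContinuousMap.const ↥U z)

/-- `X^k` can be covered by `r` open sets, each admitting a continuous section of `π_k`. -/
def TCCoverAt (X : Type*) [TopologicalSpace X] (k r : ℕ) : Prop :=
  ∃ U : Fin r → Set (Fin k → X),
    (∀ i, IsOpen (U i)) ∧ (⋃ i, U i) = Set.univ ∧ ∀ i, HasSec k (U i)

/-- The higher (sequential) topological complexity `TC_k(X)`. -/
noncomputable def higherTC (X : Type*) [TopologicalSpace X] (k : ℕ) : ℕ :=
  sInf {r | TCCoverAt X k r}

/-- A Hurewicz fibration: homotopy lifting property with respect to every space. -/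
def IsHurewiczFibration.{u} {E B : Type*} [TopologicalSpace E] [TopologicalSpace B]
    (p : C(E, B)) : Prop :=
  ∀ (Z : Type u) [TopologicalSpace Z] (f : C(Z, E)) (H : C(Z × unitInterval, B)),
    (∀ z, H (z, 0) = p (f z)) →
    ∃ G : C(Z × unitInterval, E), (∀ z, G (z, 0) = f z) ∧ ∀ z t, p (G (z, t)) = H (z, t)

/-- The equivalence relation on `S^{2n+1} ⊆ ℂ^{n+1}` identifying points in the same
orbit of the group of `m`-th roots of unity acting by complex scalar multiplication. -/
noncomputable def lensSetoid (m n : ℕ) :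
    Setoid (Metric.sphere (0 : EuclideanSpace ℂ (Fin (n + 1))) 1) where
  r x y := ∃ ζ : ℂˣ, ζ ^ m = 1 ∧
    (y : EuclideanSpace ℂ (Fin (n + 1))) = ζ • (x : EuclideanSpace ℂ (Fin (n + 1)))
  iseqv := by
    constructor
    · exact fun x => ⟨1, one_pow m, (one_smul _ _).symm⟩
    · rintro x y ⟨ζ, hζ, h⟩
      exact ⟨ζ⁻¹, by rw [inv_pow, hζ, inv_one], by rw [h, inv_smul_smul]⟩
    · rintro x y z ⟨ζ₁, h₁, e₁⟩ ⟨ζ₂, h₂, e₂⟩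
      exact ⟨ζ₂ * ζ₁, by rw [mul_pow, h₁, h₂, one_mul], by rw [e₂, e₁, smul_smul]⟩

/-- The lens space `L^{2n+1}_m`, the quotient of the unit sphere `S^{2n+1} ⊆ ℂ^{n+1}`
by the action of the `m`-th roots of unity, with the quotient topology. -/
noncomputable def LensSpace (m n : ℕ) : Type :=
  Quotient (lensSetoid m n)

noncomputable instance (m n : ℕ) : TopologicalSpace (LensSpace m n) :=
  inferInstanceAs (TopologicalSpace (Quotient (lensSetoid m n)))

namespace LensTC

/-! ### Augmented complexes with a contraction, and the periodic resolution of a cyclic group -/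

/-- A complex of `m`-torsion groups with an action of `(ZMod m)^κ`, augmented over `ZMod m` by `eps`
with unit `eta`, together with a contraction `s` onto the image of `eta` that satisfies the side
conditions `s s = 0`, `eps s = 0`, `s eta = 0` and need not be equivariant. The grading is not
recorded: `M` is the total group. -/
structure Cx (m κ : ℕ) where
  M : Type
  [ab : AddCommGroup M]
  act : (Fin κ → ZMod m) → M →+ M
  d : M →+ M
  s : M →+ M
  eps : M →+ ZMod m
  eta : ZMod m →+ M
  tors : ∀ x : M, m • x = 0
  act_zero : ∀ x, act 0 x = x
  act_add : ∀ a b x, act (a + b) x = act a (act b x)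
  act_d : ∀ a x, act a (d x) = d (act a x)
  eps_act : ∀ a x, eps (act a x) = eps x
  dd : ∀ x, d (d x) = 0
  ss : ∀ x, s (s x) = 0
  ds : ∀ x, d (s x) + s (d x) = x - eta (eps x)
  eps_d : ∀ x, eps (d x) = 0
  eps_s : ∀ x, eps (s x) = 0
  s_eta : ∀ c, s (eta c) = 0
  d_eta : ∀ c, d (eta c) = 0
  eps_eta : ∀ c, eps (eta c) = c

attribute [instance] Cx.ab

/-- `ZMod m` concentrated in degree `0`, for the trivial group. -/
def Cx.point (m : ℕ) : Cx m 0 where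
  M := ZMod m
  act _ := AddMonoidHom.id _
  d := 0
  s := 0
  eps := AddMonoidHom.id _
  eta := AddMonoidHom.id _
  tors x := by simp
  act_zero _ := rfl
  act_add _ _ _ := rfl
  act_d _ _ := by simp
  eps_act _ _ := rfl
  dd _ := by simp
  ss _ := by simp
  ds _ := by simp
  eps_d _ := by simp
  eps_s _ := by simp
  s_eta _ := by simp
  d_eta _ := by simp
  eps_eta _ := rfl

section W
variable {m : ℕ} [NeZero m] {M : Type*} [AddCommGroup M]

/-- The differential of the periodic resolution of `ZMod m` over its group ring, with coefficients
in `M`: `w n i` is the coefficient of the basis vector `i` in degree `n`. It is `T - 1` from odd to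
even degrees, where `T` is translation by `1`, and the norm from positive even to odd degrees. -/
def dW (w : ℕ → ZMod m → M) : ℕ → ZMod m → M := fun n i =>
  if Even n then w (n + 1) (i - 1) - w (n + 1) i else ∑ j, w (n + 1) j

/-- A contraction of the periodic resolution, given by the partial sums `1 + T + … + T^(a-1)` from
even to odd degrees and by reading off the coefficient of `-1` from odd to even degrees. -/
def sW (w : ℕ → ZMod m → M) : ℕ → ZMod m → M
  | 0, _ => 0
  | n + 1, i => if Even n then ∑ a ∈ Finset.Ico (i.val + 1) m, w n (a : ZMod m)
      else if i = 0 then w n (-1) else 0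

lemma sum_shift (f : ZMod m → M) (c : ZMod m) : ∑ i, f (i - c) = ∑ i, f i :=
  Equiv.sum_comp (Equiv.subRight c) f

lemma val_sub_one' {i : ZMod m} (hi : i ≠ 0) : (i - 1).val + 1 = i.val := by
  have h1 : (i - 1).val < m := ZMod.val_lt _
  have h2 : (((i - 1).val + 1 : ℕ) : ZMod m) = i := by push_cast; simp
  have h3 : (i - 1).val + 1 ≠ m := fun h => hi (by rw [← h2, h, ZMod.natCast_self])
  conv_rhs => rw [← h2, ZMod.val_natCast, Nat.mod_eq_of_lt (by omega)]

lemma val_neg_one' : (-1 : ZMod m).val + 1 = m := by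
  obtain ⟨n, rfl⟩ : ∃ n, m = n + 1 := ⟨m - 1, by have := NeZero.ne m; omega⟩
  rw [ZMod.val_neg_one]

lemma sum_zmod (f : ZMod m → M) : ∑ i, f i = ∑ a ∈ Finset.Ico 0 m, f (a : ZMod m) := by
  refine Finset.sum_bij' (fun i _ => i.val) (fun a _ => (a : ZMod m)) ?_ ?_ ?_ ?_ ?_
  · intro i _; simp [ZMod.val_lt]
  · intro i _; simp
  · intro i _; simp
  · intro a ha; simp at ha; simp [ZMod.val_natCast, Nat.mod_eq_of_lt ha]
  · intro i _; simp

lemma sum_zmod' (f : ZMod m → M) : ∑ i, f i = f 0 + ∑ a ∈ Finset.Ico 1 m, f (a : ZMod m) := by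
  rw [sum_zmod, Finset.sum_eq_sum_Ico_succ_bot (NeZero.pos m)]; simp

lemma dW_dW (w : ℕ → ZMod m → M) : dW (dW w) = 0 := by
  funext n i
  by_cases h : Even n
  · have h' : ¬ Even (n + 1) := by simpa [Nat.even_add_one] using h
    simp [dW, h, h']
  · have h' : Even (n + 1) := by simpa [Nat.even_add_one] using h
    simp [dW, h, h', sum_shift (fun j => w (n+1+1) j) 1]

lemma sW_sW (w : ℕ → ZMod m → M) : sW (sW w) = 0 := by
  funext n i
  rcases n with _ | _ | n
  · rfl
  · simp [sW]
  · by_cases h : Even n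
    · have h' : ¬ Even (n + 1) := by simpa [Nat.even_add_one] using h
      simp [sW, h, h', val_neg_one']
    · have h' : Even (n + 1) := by simpa [Nat.even_add_one] using h
      simp only [sW, h, h', if_true, if_false, Pi.zero_apply]
      refine Finset.sum_eq_zero fun a ha => ?_
      rw [if_neg]
      simp only [Finset.mem_Ico] at ha
      intro h0
      have : (a : ZMod m).val = a := by rw [ZMod.val_natCast, Nat.mod_eq_of_lt ha.2]
      rw [h0] at this; simp at this; omega

/-- The identity `d s + s d = 1` in even degrees, with the correction by the augmentation or by the
norm at `0`. -/
lemma tail_sum (f : ZMod m → M) (i : ZMod m) :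
    ∑ a ∈ Finset.Ico ((i - 1).val + 1) m, f a - ∑ a ∈ Finset.Ico (i.val + 1) m, f a
      = f i - if i = 0 then ∑ j, f j else 0 := by
  by_cases hi : i = 0
  · subst hi
    have := val_neg_one' (m := m)
    simp only [zero_sub, this, sum_zmod' f]
    simp
  · rw [val_sub_one' hi, Finset.sum_eq_sum_Ico_succ_bot (ZMod.val_lt i)]
    simp [hi]

/-- The telescoping sum behind `d s + s d = 1` in odd degrees. -/
lemma tail_tele (f : ZMod m → M) (i : ZMod m) :
    ∑ a ∈ Finset.Ico (i.val + 1) m, (f ((a : ZMod m) - 1) - f a) = f i - f (-1) := by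
  have h1 : i.val + 1 ≤ m := ZMod.val_lt i
  have key : ∀ b, i.val + 1 ≤ b →
      ∑ a ∈ Finset.Ico (i.val + 1) b, (f ((a : ZMod m) - 1) - f a) = f i - f ((b : ZMod m) - 1) := by
    intro b hb
    induction b, hb using Nat.le_induction with
    | base => simp
    | succ b hb ih => rw [Finset.sum_Ico_succ_top hb, ih]; push_cast; simp
  rw [key m h1]; simp

/-- The contraction is a homotopy from the identity to the augmentation followed by the inclusion
of the basis vector `0` of degree `0`. -/
lemma dW_sW (w : ℕ → ZMod m → M) (n : ℕ) (i : ZMod m) :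
    dW (sW w) n i + sW (dW w) n i
      = w n i - if n = 0 ∧ i = 0 then ∑ j, w 0 j else 0 := by
  rcases n with _ | n
  · simp only [dW, sW, Even.zero, if_true, true_and, add_zero]
    exact tail_sum (w 0) i
  · by_cases h : Even n
    · have h' : ¬ Even (n + 1) := by simpa [Nat.even_add_one] using h
      simp only [dW, sW, h, h', if_true, if_false]
      rw [tail_tele]; simp
    · have h' : Even (n + 1) := by simpa [Nat.even_add_one] using h
      simp only [dW, sW, h, h', if_true, if_false]
      rw [tail_sum]
      by_cases hi : i = 0 <;> simp [hi]

end W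

/-! ### Tensor powers of the periodic resolution -/

section W
variable {m : ℕ} [NeZero m] {M : Type*} [AddCommGroup M]

/-- The element `x` placed in degree `0` at the group element `0`. -/
def pt00 (x : M) : ℕ → ZMod m → M := fun n i => if n = 0 ∧ i = 0 then x else 0

lemma pt00_add (x y : M) : (pt00 (x + y) : ℕ → ZMod m → M) = pt00 x + pt00 y := by
  funext n i; by_cases h : n = 0 ∧ i = 0 <;> simp [pt00, h]

lemma sum_pt00 (x : M) : ∑ j, (pt00 x : ℕ → ZMod m → M) 0 j = x := by
  simp [pt00]

lemma dW_pt00 (x : M) : dW (pt00 x : ℕ → ZMod m → M) = 0 := by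
  funext n i; simp [dW, pt00]

lemma sW_pt00 (x : M) : sW (pt00 x : ℕ → ZMod m → M) = 0 := by
  funext n i
  rcases n with _ | _ | n
  · rfl
  · simp only [sW, Even.zero, if_true, Pi.zero_apply]
    refine Finset.sum_eq_zero fun a ha => ?_
    simp only [Finset.mem_Ico] at ha
    simp only [pt00, true_and]
    rw [if_neg]
    intro h0
    have : (a : ZMod m).val = a := by rw [ZMod.val_natCast, Nat.mod_eq_of_lt ha.2]
    rw [h0] at this; simp at this; omega
  · simp [sW, pt00]

lemma dW_add (v w : ℕ → ZMod m → M) : dW (v + w) = dW v + dW w := by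
  funext n i
  by_cases h : Even n
  · simp [dW, h]; abel
  · simp [dW, h, Finset.sum_add_distrib]

lemma sW_add (v w : ℕ → ZMod m → M) : sW (v + w) = sW v + sW w := by
  funext n i
  rcases n with _ | n
  · simp [sW]
  · by_cases h : Even n
    · simp [sW, h, Finset.sum_add_distrib]
    · by_cases hi : i = 0 <;> simp [sW, h, hi]

lemma dW_sign (φ : M →+ M) (w : ℕ → ZMod m → M) (n : ℕ) (i : ZMod m) :
    dW (fun n i => (-1 : ℤ) ^ n • φ (w n i)) n i = -((-1 : ℤ) ^ n • φ (dW w n i)) := by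
  by_cases h : Even n
  · simp [dW, h, pow_succ]; abel
  · simp [dW, h, pow_succ, map_sum, Finset.smul_sum]

lemma sW_sign (φ : M →+ M) (w : ℕ → ZMod m → M) (n : ℕ) (i : ZMod m) :
    sW (fun n i => (-1 : ℤ) ^ n • φ (w n i)) n i = -((-1 : ℤ) ^ n • φ (sW w n i)) := by
  rcases n with _ | n
  · simp [sW]
  · by_cases h : Even n
    · simp [sW, h, pow_succ, map_sum]
    · by_cases hi : i = 0 <;> simp [sW, h, hi, pow_succ]

lemma sum_dW_zero (w : ℕ → ZMod m → M) : ∑ i, dW w 0 i = 0 := by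
  simp [dW, sum_shift (fun j => w 1 j) 1]

lemma dW_shift (w : ℕ → ZMod m → M) (c : ZMod m) (φ : M →+ M) :
    dW (fun n i => φ (w n (i - c))) = fun n i => φ (dW w n (i - c)) := by
  funext n i
  by_cases h : Even n
  · simp only [dW, h, if_true, map_sub]
    rw [show i - 1 - c = i - c - 1 by ring]
  · simp only [dW, h, if_false, map_sum]
    exact sum_shift (fun j => φ (w (n + 1) j)) c

end W

/-- The tensor product of the periodic resolution of `ZMod m` with a complex `C`: an element is a
family of coefficients in `C`, indexed by the degree and the group element of the basis vector of
the periodic resolution. -/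
def Cx.tens {m κ : ℕ} [NeZero m] (C : Cx m κ) : Cx m (κ + 1) where
  M := ℕ → ZMod m → C.M
  act g :=
    { toFun := fun w n i => C.act (Fin.tail g) (w n (i - g 0))
      map_zero' := by funext n i; simp
      map_add' := fun v w => by funext n i; simp }
  d :=
    { toFun := fun w => dW w + fun n i => (-1 : ℤ) ^ n • C.d (w n i)
      map_zero' := by funext n i; simp [dW]
      map_add' := fun v w => by rw [dW_add]; funext n i; simp; abel }
  s :=
    { toFun := fun w => sW w + pt00 (C.s (∑ j, w 0 j))
      map_zero' := by
        funext n i; rcases n with _ | n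
        · simp [sW, pt00]
        · simp [sW, pt00]
      map_add' := fun v w => by
        rw [sW_add]; simp [Finset.sum_add_distrib, pt00_add]; abel }
  eps :=
    { toFun := fun w => ∑ i, C.eps (w 0 i)
      map_zero' := by simp
      map_add' := fun v w => by simp [Finset.sum_add_distrib] }
  eta :=
    { toFun := fun c => pt00 (C.eta c)
      map_zero' := by funext n i; simp [pt00]
      map_add' := fun v w => by simp [pt00_add] }
  tors x := by funext n i; simp [C.tors]
  act_zero x := by
    funext n i
    have : Fin.tail (0 : Fin (κ + 1) → ZMod m) = 0 := rfl
    simp [C.act_zero, this]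
  act_add a b x := by
    funext n i
    have : Fin.tail (a + b) = Fin.tail a + Fin.tail b := rfl
    simp [C.act_add, this, sub_sub]
  act_d a x := by
    have h := dW_shift x (a 0) (C.act (Fin.tail a))
    funext n i
    have h := congrFun (congrFun h n) i
    simp [h, C.act_d]
  eps_act a x := by
    simp only [AddMonoidHom.coe_mk, ZeroHom.coe_mk, C.eps_act]
    exact sum_shift (fun j => C.eps (x 0 j)) (a 0)
  dd x := by
    simp only [AddMonoidHom.coe_mk, ZeroHom.coe_mk, dW_add, dW_dW]
    funext n i
    simp [dW_sign, C.dd]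
  ss x := by
    simp only [AddMonoidHom.coe_mk, ZeroHom.coe_mk, sW_add, sW_sW, sW_pt00]
    simp only [Pi.add_apply, Finset.sum_add_distrib, sum_pt00]
    funext n i
    simp [sW, C.ss, pt00]
  ds x := by
    simp only [AddMonoidHom.coe_mk, ZeroHom.coe_mk, dW_add, sW_add, dW_pt00]
    simp only [Pi.add_apply, Finset.sum_add_distrib, sum_dW_zero]
    funext n i
    have h1 := dW_sW x n i
    have h2 := sW_sign C.d x n i
    have h3 := C.ds (∑ j, x 0 j)
    simp only [Pi.add_apply, Pi.sub_apply, Pi.zero_apply, h2, map_add, smul_add]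
    rw [← eq_sub_iff_add_eq] at h1
    rw [h1]
    by_cases h : n = 0 ∧ i = 0
    · obtain ⟨rfl, rfl⟩ := h
      simp only [map_sum] at h3
      rw [← eq_sub_iff_add_eq] at h3
      simp [pt00, h3]
      abel
    · simp [pt00, h]
      abel
  eps_d x := by
    simp only [AddMonoidHom.coe_mk, ZeroHom.coe_mk, Pi.add_apply, map_add, map_zsmul, C.eps_d]
    rw [← map_sum, sum_dW_zero]; simp
  eps_s x := by
    simp only [AddMonoidHom.coe_mk, ZeroHom.coe_mk, Pi.add_apply, map_add]
    rw [← map_sum, ← map_sum, sum_pt00]; simp [sW, C.eps_s]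
  s_eta c := by
    simp only [AddMonoidHom.coe_mk, ZeroHom.coe_mk, sW_pt00, sum_pt00, C.s_eta]
    funext n i; simp [pt00]
  d_eta c := by
    simp only [AddMonoidHom.coe_mk, ZeroHom.coe_mk, dW_pt00]
    funext n i
    by_cases h : n = 0 ∧ i = 0 <;> simp [pt00, h, C.d_eta]
  eps_eta c := by
    simp only [AddMonoidHom.coe_mk, ZeroHom.coe_mk]
    rw [← map_sum, sum_pt00, C.eps_eta]

/-- The `κ`-fold tensor power of the periodic resolution. -/
def cx (m : ℕ) [NeZero m] : (κ : ℕ) → Cx m κ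
  | 0 => Cx.point m
  | κ + 1 => (cx m κ).tens

/-! ### Chain maps from one more factor of the periodic resolution -/

/-- The direction in which the `j`-th lattice factor moves the label: the coordinate `j` for an
ordinary factor, all coordinates backwards for the last one. -/
def gvec (m κ : ℕ) (j : Fin (κ + 1)) : Fin κ → ZMod m := fun i =>
  if j = Fin.last κ then -1 else if j = i.castSucc then 1 else 0

/-- The operator in the boundary of the degree `r` generator of the periodic resolution, with `g`
acting as the generator of the cyclic group: `g - 1` for odd `r`, the norm for positive even `r`. -/
def Cx.Dop {m κ : ℕ} (C : Cx m κ) (g : Fin κ → ZMod m) (r : ℕ) : C.M →+ C.M :=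
  if r = 0 then 0 else if Odd r then C.act g - AddMonoidHom.id _
    else ∑ a ∈ Finset.range m, C.act (a • g)

/-- The family `f` is a chain map, in multidegrees at most `3`, from the tensor product of `κ + 1`
periodic resolutions to `C`: `f n` is the image of the generator of multidegree `n`, and the `j`-th
cyclic group acts on `C` through `gvec m κ j`. -/
def Cx.Rel {m κ : ℕ} (C : Cx m κ) (f : (Fin (κ + 1) → ℕ) → C.M) : Prop :=
  ∀ n : Fin (κ + 1) → ℕ, (∀ j, n j ≤ 3) → C.d (f n) =
    ∑ j, (-1 : ℤ) ^ (∑ i ∈ Finset.Iio j, n i) •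
      C.Dop (gvec m κ j) (n j) (f (Function.update n j (n j - 1)))

lemma gvec_tail_succ (m κ : ℕ) (j : Fin (κ + 1)) :
    Fin.tail (gvec m (κ + 1) j.succ) = gvec m κ j := by
  funext i
  simp only [Fin.tail, gvec]
  simp only [← Fin.succ_last, Fin.succ_inj, ← Fin.succ_castSucc]

lemma gvec_tail_zero (m κ : ℕ) : Fin.tail (gvec m (κ + 1) 0) = 0 := by
  funext i
  simp only [Fin.tail, gvec]
  rw [← Fin.succ_last, ← Fin.succ_castSucc, if_neg (Fin.succ_ne_zero _).symm,
    if_neg (Fin.succ_ne_zero _).symm]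
  rfl

lemma gvec_zero_zero (m κ : ℕ) : gvec m (κ + 1) 0 0 = 1 := by
  simp only [gvec]
  rw [← Fin.succ_last, if_neg (Fin.succ_ne_zero _).symm]; simp

section
variable {m : ℕ} [NeZero m]

/-- Functions on `ZMod m` with equal differences differ by a constant, so they have equal sums,
since `m` times a constant is `0`. -/
lemma sum_eq_of_diff (u v : ZMod m → ZMod m) (h : ∀ i, u (i - 1) - u i = v (i - 1) - v i) :
    ∑ i, u i = ∑ i, v i := by
  have h1 : ∀ a : ℕ, u a - v a = u 0 - v 0 := by
    intro a
    induction a with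
    | zero => simp
    | succ a ih =>
      have := h ((a + 1 : ℕ) : ZMod m)
      push_cast at this ⊢
      rw [add_sub_cancel_right] at this
      rw [← ih]; linear_combination -this
  have h2 : ∀ i, u i = v i + (u 0 - v 0) := by
    intro i
    have := h1 i.val
    rw [ZMod.natCast_zmod_val] at this
    rw [← this]; ring
  rw [Finset.sum_congr rfl fun i _ => h2 i, Finset.sum_add_distrib, Finset.sum_const, Finset.card_univ, ZMod.card, nsmul_eq_mul,
    ZMod.natCast_self, zero_mul, add_zero]

lemma sum_eq_neg_of_diff (u v : ZMod m → ZMod m) (h : ∀ i, u (i - 1) - u i = v (i + 1) - v i) :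
    ∑ i, u i = -∑ i, v i := by
  rw [sum_eq_of_diff u (fun i => -v (i - (-1))) (fun i => by
    rw [h i, show i - 1 - -1 = i by ring, show i - -1 = i + 1 by ring]; ring), Finset.sum_neg_distrib,
    sum_shift]

variable {κ : ℕ} (C : Cx m κ)

lemma Cx.Dop_zero (g : Fin κ → ZMod m) : C.Dop g 0 = 0 := by simp [Cx.Dop]

lemma Cx.Dop_odd (g : Fin κ → ZMod m) {r : ℕ} (h : Odd r) (x : C.M) :
    C.Dop g r x = C.act g x - x := by
  have : r ≠ 0 := by rintro rfl; simp at h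
  simp [Cx.Dop, h, this]

lemma Cx.Dop_even (g : Fin κ → ZMod m) {r : ℕ} (h : Even r) (h0 : r ≠ 0) (x : C.M) :
    C.Dop g r x = ∑ a ∈ Finset.range m, C.act (a • g) x := by
  have : ¬ Odd r := by simpa using h
  simp [Cx.Dop, this, h0]

/-- The coefficient of an element of the tensor product. -/
def coef (n : ℕ) (i : ZMod m) : C.tens.M →+ C.M where
  toFun w := (w : ℕ → ZMod m → C.M) n i
  map_zero' := rfl
  map_add' _ _ := rfl

lemma coef_act (g : Fin (κ + 1) → ZMod m) (w : C.tens.M) (n : ℕ) (i : ZMod m) :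
    coef C n i (C.tens.act g w) = C.act (Fin.tail g) (coef C n (i - g 0) w) := rfl

lemma coef_d (w : C.tens.M) (n : ℕ) (i : ZMod m) :
    coef C n i (C.tens.d w) =
      (if Even n then coef C (n + 1) (i - 1) w - coef C (n + 1) i w
        else ∑ j, coef C (n + 1) j w) + (-1 : ℤ) ^ n • C.d (coef C n i w) := rfl

lemma tens_eps (w : C.tens.M) : C.tens.eps w = ∑ i, C.eps (coef C 0 i w) := rfl

/-- The sum of the coefficients in degree `3` of the first tensor factor. -/
def sig3 : C.tens.M →+ C.M := ∑ i, coef C 3 i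

lemma sig3_apply (x : C.tens.M) : sig3 C x = ∑ i, coef C 3 i x := by
  simp [sig3]

lemma sig3_act (g : Fin (κ + 1) → ZMod m) (x : C.tens.M) :
    sig3 C (C.tens.act g x) = C.act (Fin.tail g) (sig3 C x) := by
  simp only [sig3_apply, coef_act, map_sum]
  exact sum_shift (fun j => C.act (Fin.tail g) (coef C 3 j x)) (g 0)

/-- In odd degree the differential of the periodic resolution is the norm, whose total coefficient
is divisible by `m` and so vanishes on torsion coefficients. -/
lemma sig3_d (x : C.tens.M) : sig3 C (C.tens.d x) = - C.d (sig3 C x) := by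
  have h3 : ¬ Even 3 := by decide
  simp only [sig3_apply, coef_d, h3, if_false, Finset.sum_add_distrib]
  rw [Finset.sum_const, Finset.card_univ, ZMod.card, C.tors, zero_add]
  simp [Odd.neg_one_pow (by decide : Odd 3)]

lemma sig3_Dop (g : Fin (κ + 1) → ZMod m) (r : ℕ) (x : C.tens.M) :
    sig3 C (C.tens.Dop g r x) = C.Dop (Fin.tail g) r (sig3 C x) := by
  rcases Nat.eq_zero_or_pos r with rfl | hr
  · simp [Cx.Dop_zero]
  · rcases Nat.even_or_odd r with h | h
    · rw [Cx.Dop_even _ _ h hr.ne', Cx.Dop_even _ _ h hr.ne', map_sum]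
      refine Finset.sum_congr rfl fun a _ => ?_
      rw [sig3_act]; rfl
    · rw [Cx.Dop_odd _ _ h, Cx.Dop_odd _ _ h, map_sub, sig3_act]

lemma sum_Iio_succ' {κ : ℕ} (a : ℕ) (n : Fin κ → ℕ) (j : Fin κ) :
    ∑ i ∈ Finset.Iio j.succ, (Fin.cons a n : Fin (κ + 1) → ℕ) i = a + ∑ i ∈ Finset.Iio j, n i := by
  have h : ∀ {N : ℕ} (j : Fin N) (f : Fin N → ℕ), ∑ i ∈ Finset.Iio j, f i = ∑ i, if i < j then f i else 0 := by
    intro N j f; rw [← Finset.sum_filter]; congr 1; ext; simp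
  rw [h, h, Fin.sum_univ_succ]; simp


lemma update_cons_zero (a b : ℕ) (n : Fin κ → ℕ) :
    Function.update (Fin.cons a n : Fin (κ + 1) → ℕ) 0 b = Fin.cons b n := by
  funext i; refine Fin.cases ?_ (fun i => ?_) i <;> simp

lemma update_cons_succ (a b : ℕ) (n : Fin κ → ℕ) (j : Fin κ) :
    Function.update (Fin.cons a n : Fin (κ + 1) → ℕ) j.succ b
      = Fin.cons a (Function.update n j b) := by
  rw [Fin.cons_update]

/-- Evaluating the first lattice factor on a top cell eliminates that factor. -/
lemma rel_elim {f : (Fin (κ + 2) → ℕ) → C.tens.M} (hf : C.tens.Rel f) :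
    C.Rel (fun n => sig3 C (f (Fin.cons 3 n))) := by
  intro n hn
  have h := congrArg (sig3 C) (hf (Fin.cons 3 n) (by
    intro j; refine Fin.cases ?_ (fun j => ?_) j
    · simp
    · simpa using hn j))
  rw [sig3_d, Fin.sum_univ_succ, map_add, map_sum] at h
  have h0 : sig3 C ((-1 : ℤ) ^ (∑ i ∈ Finset.Iio (0 : Fin (κ + 2)), (Fin.cons 3 n : Fin (κ + 2) → ℕ) i) •
      C.tens.Dop (gvec m (κ + 1) 0) ((Fin.cons 3 n : Fin (κ + 2) → ℕ) 0)
        (f (Function.update (Fin.cons 3 n) 0 ((Fin.cons 3 n : Fin (κ + 2) → ℕ) 0 - 1)))) = 0 := by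
    rw [map_zsmul, sig3_Dop, gvec_tail_zero, Fin.cons_zero, Cx.Dop_odd _ _ (by decide), C.act_zero]
    simp
  rw [h0, zero_add] at h
  rw [← neg_inj, h, ← Finset.sum_neg_distrib]
  refine Finset.sum_congr rfl fun j _ => ?_
  rw [map_zsmul, sig3_Dop, gvec_tail_succ, sum_Iio_succ', Fin.cons_succ, update_cons_succ, pow_add]
  simp [Odd.neg_one_pow (by decide : Odd 3)]

/-- The relation for a cell with only one non-degenerate factor, after augmentation. -/
lemma rel_eps {f : (Fin (κ + 2) → ℕ) → C.tens.M} (hf : C.tens.Rel f) (r : ℕ) (hr : r ≤ 3)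
    (p : ℕ) (i : ZMod m) :
    C.eps (coef C p i (C.tens.d (f (Fin.cons r 0)))) =
      C.eps (coef C p i (C.tens.Dop (gvec m (κ + 1) 0) r (f (Fin.cons (r - 1) 0)))) := by
  have h := hf (Fin.cons r 0) (by
    intro j; refine Fin.cases ?_ (fun j => ?_) j <;> simp [hr])
  rw [Fin.sum_univ_succ, Finset.sum_eq_zero (s := Finset.univ)
    (fun j _ => by rw [Fin.cons_succ]; simp [Cx.Dop_zero]), add_zero, Fin.cons_zero,
    update_cons_zero, show Finset.Iio (0 : Fin (κ + 2)) = ∅ by ext; simp] at h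
  rw [Finset.sum_empty, pow_zero, one_smul] at h
  rw [h]

/-- The elimination of the first factor preserves the augmentation of the initial value: for cells
that are degenerate in the other factors, the relations carry the total coefficient of
`f (r, 0, …, 0)` in degree `r` down from `r = 3` to `r = 0` unchanged. -/
lemma eps_elim {f : (Fin (κ + 2) → ℕ) → C.tens.M} (hf : C.tens.Rel f) :
    C.eps (sig3 C (f (Fin.cons 3 0))) = C.tens.eps (f 0) := by
  set g : ℕ → ZMod m → ZMod m := fun r i => C.eps (coef C r i (f (Fin.cons r 0))) with hg
  have odd : ∀ r, r + 1 ≤ 3 → Even r → ∑ i, g (r + 1) i = ∑ i, g r i := by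
    intro r hr he
    apply sum_eq_of_diff
    intro i
    have h := rel_eps C hf (r + 1) hr r i
    rw [Cx.Dop_odd _ _ he.add_one, map_sub, coef_act, gvec_tail_zero, C.act_zero, gvec_zero_zero,
      coef_d] at h
    simpa [he, C.eps_d] using h
  have even : ∑ i, g 2 i = ∑ i, g 1 i := by
    have h := rel_eps C hf 2 (by norm_num) 1 0
    have ht : ∀ a : ℕ, Fin.tail (a • gvec m (κ + 1) 0) = 0 := by
      intro a
      have : Fin.tail (a • gvec m (κ + 1) 0) = a • Fin.tail (gvec m (κ + 1) 0) := rfl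
      rw [this, gvec_tail_zero, smul_zero]
    have h1 : ¬ Even 1 := by decide
    rw [Cx.Dop_even _ _ (by decide) (by decide), coef_d] at h
    simp only [map_sum, coef_act, ht, C.act_zero, Pi.smul_apply, gvec_zero_zero, nsmul_one, h1,
      if_false, map_add, map_zsmul, C.eps_d, smul_zero, add_zero] at h
    change ∑ i, g 2 i = ∑ a ∈ Finset.range m, g 1 (0 - (a : ZMod m)) at h
    rw [h, Finset.range_eq_Ico, ← sum_zmod (fun a => g 1 (0 - a))]
    exact Equiv.sum_comp (Equiv.subLeft 0) (g 1)
  have : C.eps (sig3 C (f (Fin.cons 3 0))) = ∑ i, g 3 i := by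
    rw [hg, sig3_apply, map_sum]
  rw [this, odd 2 (by norm_num) (by decide), even, odd 0 (by norm_num) (by decide)]
  have h0 : (Fin.cons 0 0 : Fin (κ + 2) → ℕ) = 0 := by
    funext i; refine Fin.cases ?_ (fun i => ?_) i <;> simp
  simp only [tens_eps, hg, h0]

/-- The case of two factors. The total coefficients of `f ![b, a]` in degree `a + b` of the periodic
resolution are compared along the relations. Those with `a`, `b` both odd vanish, and the even-even
ones satisfy `(2, 2) = (0, 2) - (2, 0) = -2 (0, 0)`, because the second factor moves backwards and
contributes a sign in passing from `(0, 2)` to `(0, 0)`. -/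
lemma alg_base (f : (Fin 2 → ℕ) → (Cx.point m).tens.M) (hf : (Cx.point m).tens.Rel f)
    (h32 : f ![3, 2] = 0) : 2 * (Cx.point m).tens.eps (f 0) = 0 := by
  let co : ℕ → ZMod m → (Cx.point m).tens.M →+ ZMod m := coef (Cx.point m)
  have co_act : ∀ g w p i, co p i ((Cx.point m).tens.act g w) = co p (i - g 0) w := fun _ _ _ _ => rfl
  have co_d : ∀ w p i, co p i ((Cx.point m).tens.d w) =
      if Even p then co (p + 1) (i - 1) w - co (p + 1) i w else ∑ j, co (p + 1) j w := by
    intro w p i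
    have h := coef_d (Cx.point m) w p i
    have hpt : ∀ x, (Cx.point m).d x = 0 := fun _ => rfl
    rw [hpt, smul_zero, add_zero] at h
    exact h
  have co_eps : ∀ w, (Cx.point m).tens.eps w = ∑ i, co 0 i w := fun _ => rfl
  clear_value co
  have hDop : ∀ (g : Fin 1 → ZMod m) (_ : g 0 = 1 ∨ g 0 = -1) (r : ℕ) (w : (Cx.point m).tens.M)
      (p : ℕ) (i : ZMod m), co p i ((Cx.point m).tens.Dop g r w) =
        if r = 0 then 0 else if Odd r then co p (i - g 0) w - co p i w else ∑ j, co p j w := by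
    intro g hg r w p i
    have hsm : ∀ a : ℕ, (a • g) 0 = a * g 0 := fun a => nsmul_eq_mul a (g 0)
    rcases Nat.eq_zero_or_pos r with rfl | hr
    · simp [Cx.Dop_zero]
    rcases Nat.even_or_odd r with h | h
    · have h' : ¬ Odd r := by simpa using h
      rw [Cx.Dop_even _ _ h hr.ne']
      simp only [hr.ne', h', if_false, map_sum, co_act, hsm]
      rw [Finset.range_eq_Ico, ← sum_zmod (fun a => co p (i - a * g 0) w)]
      rcases hg with hg | hg
      · rw [hg]; simp only [mul_one]
        exact Equiv.sum_comp (Equiv.subLeft i) (fun j => co p j w)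
      · rw [hg]; simp only [mul_neg, mul_one, sub_neg_eq_add]
        exact Equiv.sum_comp (Equiv.addLeft i) (fun j => co p j w)
    · rw [Cx.Dop_odd _ _ h]
      simp only [hr.ne', h, if_true, if_false, map_sub, co_act]
  -- `F b a p i` is the coefficient of the basis vector `i` in degree `p` of `f ![b, a]`.
  let F : ℕ → ℕ → ℕ → ZMod m → ZMod m := fun b a p i => co p i (f ![b, a])
  let D : ℕ → ZMod m → (ℕ → ZMod m → ZMod m) → ℕ → ZMod m → ZMod m := fun r c w p i =>
    if r = 0 then 0 else if Odd r then w p (i - c) - w p i else ∑ j, w p j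
  have rel : ∀ b a p i, b ≤ 3 → a ≤ 3 →
      (if Even p then F b a (p + 1) (i - 1) - F b a (p + 1) i else ∑ j, F b a (p + 1) j) =
      D b 1 (F (b - 1) a) p i + (-1) ^ b * D a (-1) (F b (a - 1)) p i := by
    intro b a p i hb ha
    have h := congrArg (co p i) (hf ![b, a] (by intro j; fin_cases j <;> simpa))
    rw [Fin.sum_univ_two, co_d] at h
    have e0 : Finset.Iio (0 : Fin 2) = ∅ := by ext; simp
    have e1 : Finset.Iio (1 : Fin 2) = {0} := by decide
    have u0 : Function.update ![b, a] 0 (b - 1) = ![b - 1, a] := by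
      funext i; fin_cases i <;> simp
    have u1 : Function.update ![b, a] 1 (a - 1) = ![b, a - 1] := by
      funext i; fin_cases i <;> simp
    have g0 : gvec m 1 0 0 = 1 := gvec_zero_zero m 0
    have g1 : gvec m 1 1 0 = -1 := by simp [gvec]
    rw [e0, e1] at h
    simp only [Finset.sum_empty, Finset.sum_singleton, pow_zero, one_smul,
      Matrix.cons_val_zero, Matrix.cons_val_one, u0, u1, map_add, map_zsmul] at h
    rw [hDop _ (Or.inl g0), hDop _ (Or.inr g1), g0, g1] at h
    refine h.trans ?_
    simp only [F, D, zsmul_eq_mul]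
    push_cast
    rfl
  have fin : ∑ i, F 3 2 5 i = 0 := by simp [F, h32]
  have f0 : (0 : Fin 2 → ℕ) = ![0, 0] := by funext i; fin_cases i <;> rfl
  have goal : (Cx.point m).tens.eps (f 0) = ∑ i, F 0 0 0 i := by
    rw [co_eps, f0]
  rw [goal]
  clear_value F
  have o3 : Odd 3 := by decide
  have n3 : ¬ Even 3 := by decide
  have r10 := fun i => rel 1 0 0 i (by norm_num) (by norm_num)
  have r01 := fun i => rel 0 1 0 i (by norm_num) (by norm_num)
  have r11 := fun i => rel 1 1 1 i (by norm_num) (by norm_num)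
  have r20 := rel 2 0 1 0 (by norm_num) (by norm_num)
  have r02 := rel 0 2 1 0 (by norm_num) (by norm_num)
  have r21 := fun i => rel 2 1 2 i (by norm_num) (by norm_num)
  have r12 := fun i => rel 1 2 2 i (by norm_num) (by norm_num)
  have r22 := rel 2 2 3 0 (by norm_num) (by norm_num)
  have r30 := fun i => rel 3 0 2 i (by norm_num) (by norm_num)
  have r31 := fun i => rel 3 1 3 i (by norm_num) (by norm_num)
  have r32 := fun i => rel 3 2 4 i (by norm_num) (by norm_num)
  have even4 : Even 4 := by decide
  have n2 : ¬ Odd 2 := by decide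
  simp [D, o3, n3, n2, even4, Odd.neg_one_pow] at r10 r01 r11 r20 r02 r21 r12 r22 r30 r31 r32
  have s01 := sum_eq_neg_of_diff _ _ r01
  have s10 := sum_eq_of_diff _ _ r10
  have s11 : ∑ x, F 1 1 2 x = 0 := by
    have h1 := r01 0
    have h2 := r10 1
    rw [r11 0]; simp only [sub_self, zero_sub, zero_add] at h1 h2 ⊢
    linear_combination h1 + h2
  have s21 : ∑ x, F 2 1 3 x = - ∑ x, F 2 0 2 x :=
    sum_eq_neg_of_diff _ _ fun i => by rw [r21 i, s11, zero_add]
  have s12 : ∑ x, F 1 2 3 x = ∑ x, F 0 2 2 x :=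
    sum_eq_of_diff _ _ fun i => by rw [r12 i, s11, neg_zero, add_zero]
  have s31 : ∑ x, F 3 1 4 x = 0 := by
    have h1 := r21 0
    have h2 := r30 1
    rw [r31 0]; simp only [s11, sub_self, zero_sub, zero_add] at h1 h2 ⊢
    linear_combination h1 + h2
  have s32 : ∑ x, F 3 2 5 x = ∑ x, F 2 2 4 x :=
    sum_eq_of_diff _ _ fun i => by rw [r32 i, s31, neg_zero, add_zero]
  have key : (0 : ZMod m) = -(2 * ∑ i, F 0 0 0 i) := by
    rw [← fin, s32, r22, s21, s12, r02, r20, s01, s10]; ring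
  rw [← neg_eq_zero, ← key]

/-- The multidegree `(3, …, 3, 2)`. -/
def topDeg (κ : ℕ) : Fin (κ + 1) → ℕ := fun j => if j = Fin.last κ then 2 else 3

/-- A chain map, in multidegrees at most `3`, from `κ + 2` factors to the `(κ + 1)`-fold tensor power
that vanishes in multidegree `(3, …, 3, 2)` has twice its augmentation equal to `0`. -/
theorem alg_main (κ : ℕ) (f : (Fin (κ + 2) → ℕ) → (cx m (κ + 1)).M) (hf : (cx m (κ + 1)).Rel f)
    (htop : f (topDeg (κ + 1)) = 0) : 2 * (cx m (κ + 1)).eps (f 0) = 0 := by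
  induction κ with
  | zero =>
    refine alg_base f hf ?_
    have : topDeg 1 = ![3, 2] := by funext i; fin_cases i <;> rfl
    rw [← this]; exact htop
  | succ κ ih =>
    have h1 := ih _ (rel_elim (cx m (κ + 1)) hf) (by
      have : (Fin.cons 3 (topDeg (κ + 1)) : Fin (κ + 3) → ℕ) = topDeg (κ + 2) := by
        funext j; refine Fin.cases ?_ (fun j => ?_) j
        · simp only [topDeg, Fin.cons_zero]
          rw [← Fin.succ_last, if_neg (Fin.succ_ne_zero _).symm]
        · simp only [topDeg, Fin.cons_succ]
          simp only [← Fin.succ_last (κ + 1), Fin.succ_inj]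
      rw [this]
      have h0 : f (topDeg (κ + 2)) = 0 := htop
      rw [h0]; exact map_zero (sig3 (cx m (κ + 1))))
    rw [eps_elim (cx m (κ + 1)) hf] at h1
    exact h1

end

/-! ### Cubical chains of a lattice and iterated coning -/

section Cube
variable {ι : Type} [LinearOrder ι] {M : Type} [AddCommGroup M]

/-- The incidence sign of the axis `a` in a cell with set of axes `S`. -/
def sgn (S : Finset ι) (a : ι) : ℤ := (-1) ^ (S.filter (· < a)).card

/-- The boundary of a function on cells: a cell is a lattice point together with the set of axes
along which it extends by one unit. -/
def bd (ω : (ι → ℕ) → Finset ι → M) (p : ι → ℕ) (S : Finset ι) : M :=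
  ∑ a ∈ S, sgn S a • (ω (p + Pi.single a 1) (S.erase a) - ω p (S.erase a))

lemma sgn_erase_lt {S : Finset ι} {a b : ι} (ha : a ∈ S) (hab : a < b) :
    sgn S b = - sgn (S.erase a) b := by
  unfold sgn
  have : S.filter (· < b) = insert a ((S.erase a).filter (· < b)) := by
    ext x; simp only [Finset.mem_filter, Finset.mem_insert, Finset.mem_erase]
    by_cases hx : x = a
    · subst hx; simp [ha, hab]
    · simp [hx]
  rw [this, Finset.card_insert_of_notMem (by simp), pow_succ]; ring

lemma sgn_erase_gt {S : Finset ι} {a b : ι} (hab : b < a) :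
    sgn (S.erase a) b = sgn S b := by
  unfold sgn
  congr 2
  ext x; simp only [Finset.mem_filter, Finset.mem_erase]
  constructor
  · rintro ⟨⟨_, h⟩, h2⟩; exact ⟨h, h2⟩
  · rintro ⟨h, h2⟩; exact ⟨⟨(h2.trans hab).ne, h⟩, h2⟩

lemma sgn_swap {S : Finset ι} {a b : ι} (ha : a ∈ S) (hb : b ∈ S) (hab : a ≠ b) :
    sgn S a * sgn (S.erase a) b = - (sgn S b * sgn (S.erase b) a) := by
  rcases lt_or_gt_of_ne hab with h | h
  · rw [sgn_erase_lt ha h, sgn_erase_gt h]; ring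
  · rw [sgn_erase_lt hb h, sgn_erase_gt h]; ring

lemma bd_bd (ω : (ι → ℕ) → Finset ι → M) (p : ι → ℕ) (S : Finset ι) : bd (bd ω) p S = 0 := by
  let G : ι → ι → M := fun a b => (sgn S a * sgn (S.erase a) b) •
    (ω (p + Pi.single a 1 + Pi.single b 1) ((S.erase a).erase b) - ω (p + Pi.single a 1) ((S.erase a).erase b)
      - (ω (p + Pi.single b 1) ((S.erase a).erase b) - ω p ((S.erase a).erase b)))
  have h1 : bd (bd ω) p S = ∑ x ∈ S.sigma (fun a => S.erase a), G x.1 x.2 := by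
    rw [Finset.sum_sigma]
    unfold bd
    refine Finset.sum_congr rfl fun a _ => ?_
    rw [← Finset.sum_sub_distrib, Finset.smul_sum]
    refine Finset.sum_congr rfl fun b _ => ?_
    simp only [G]
    rw [mul_smul, ← smul_sub]
  rw [h1]
  refine Finset.sum_involution (fun x _ => ⟨x.2, x.1⟩) ?_ ?_ ?_ ?_
  · rintro ⟨a, b⟩ h
    simp only [Finset.mem_sigma, Finset.mem_erase] at h
    simp only [G]
    rw [sgn_swap h.1 h.2.2 h.2.1.symm, Finset.erase_right_comm, add_right_comm p, neg_smul]
    rw [neg_add_eq_zero]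
    congr 1
    abel
  · rintro ⟨a, b⟩ h _ h2
    simp only [Finset.mem_sigma, Finset.mem_erase] at h
    simp only [Sigma.mk.injEq] at h2
    exact h.2.1 h2.1
  · rintro ⟨a, b⟩ h
    simp only [Finset.mem_sigma, Finset.mem_erase] at h ⊢
    exact ⟨h.2.2, h.2.1.symm, h.1⟩
  · rintro ⟨a, b⟩ h; rfl

lemma bd_congr {ω ω' : (ι → ℕ) → Finset ι → M} {p : ι → ℕ} {S : Finset ι}
    (h : ∀ q, ∀ a ∈ S, ω q (S.erase a) = ω' q (S.erase a)) : bd ω p S = bd ω' p S :=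
  Finset.sum_congr rfl fun a ha => by rw [h _ a ha, h _ a ha]

lemma map_bd {M' : Type} [AddCommGroup M'] (φ : M →+ M') (ω : (ι → ℕ) → Finset ι → M) (p : ι → ℕ)
    (S : Finset ι) : φ (bd ω p S) = bd (fun q T => φ (ω q T)) p S := by
  simp [bd, map_sum, map_zsmul]

end Cube

section Phi
variable {ι : Type} [LinearOrder ι] {m κ : ℕ} (C : Cx m κ)
  (lab : (ι → ℕ) → Finset ι → (Fin κ → ZMod m))

/-- The contraction of `C` conjugated to have base point `g`. -/
def Cx.cone (g : Fin κ → ZMod m) : C.M →+ C.M := (C.act g).comp (C.s.comp (C.act (-g)))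

lemma Cx.cone_apply (g : Fin κ → ZMod m) (x : C.M) : C.cone g x = C.act g (C.s (C.act (-g) x)) := rfl

lemma Cx.act_neg_act (g : Fin κ → ZMod m) (x : C.M) : C.act (-g) (C.act g x) = x := by
  rw [← C.act_add, neg_add_cancel, C.act_zero]

lemma Cx.act_act_neg (g : Fin κ → ZMod m) (x : C.M) : C.act g (C.act (-g) x) = x := by
  rw [← C.act_add, add_neg_cancel, C.act_zero]

lemma Cx.cone_cone (g : Fin κ → ZMod m) (x : C.M) : C.cone g (C.cone g x) = 0 := by
  simp [Cx.cone_apply, C.act_neg_act, C.ss]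

lemma Cx.cone_eta (g : Fin κ → ZMod m) (c : ZMod m) : C.cone g (C.act g (C.eta c)) = 0 := by
  simp [Cx.cone_apply, C.act_neg_act, C.s_eta]

lemma Cx.eps_cone (g : Fin κ → ZMod m) (x : C.M) : C.eps (C.cone g x) = 0 := by
  simp [Cx.cone_apply, C.eps_act, C.eps_s]

lemma Cx.d_cone (g : Fin κ → ZMod m) (x : C.M) (hd : C.d x = 0) (he : C.eps x = 0) :
    C.d (C.cone g x) = x := by
  rw [Cx.cone_apply, ← C.act_d]
  have h := C.ds (C.act (-g) x)
  rw [← C.act_d, hd, map_zero, map_zero, add_zero, C.eps_act, he, map_zero, sub_zero] at h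
  rw [h, C.act_act_neg]

lemma Cx.cone_act (g h : Fin κ → ZMod m) (x : C.M) :
    C.cone (g + h) (C.act h x) = C.act h (C.cone g x) := by
  rw [Cx.cone_apply, Cx.cone_apply, ← C.act_add (-(g + h)) h, ← C.act_add h g]
  rw [show -(g + h) + h = -g by abel, add_comm g h]

/-- The chain map in degree `d` built from the labels by iterated coning. -/
def phiN : ℕ → (ι → ℕ) → Finset ι → C.M
  | 0, p, S => C.act (lab p S) (C.eta 1)
  | d + 1, p, S => C.cone (lab p S) (bd (phiN d) p S)

/-- The chain map from the cubical chains of the lattice to `C` determined by the labels. -/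
def phi (p : ι → ℕ) (S : Finset ι) : C.M := phiN C lab S.card p S

lemma phi_empty (p : ι → ℕ) : phi C lab p ∅ = C.act (lab p ∅) (C.eta 1) := rfl

lemma phi_nonempty (p : ι → ℕ) {S : Finset ι} (hS : S.Nonempty) :
    phi C lab p S = C.cone (lab p S) (bd (phi C lab) p S) := by
  obtain ⟨d, hd⟩ : ∃ d, S.card = d + 1 := ⟨S.card - 1, by have := hS.card_pos; omega⟩
  rw [phi, hd, phiN]
  congr 1
  refine bd_congr fun q a ha => ?_
  rw [phi, Finset.card_erase_of_mem ha, hd]; rfl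

/-- Coning over a cycle of augmentation `0` gives a bounding chain, so `phi` is an augmented chain
map. -/
lemma phi_chain (d : ℕ) : ∀ p S, S.card = d → C.d (phi C lab p S) = bd (phi C lab) p S ∧
    C.eps (phi C lab p S) = if d = 0 then 1 else 0 := by
  induction d with
  | zero =>
    intro p S hS
    rw [Finset.card_eq_zero] at hS
    subst hS
    rw [phi_empty, ← C.act_d, C.d_eta, C.eps_act, C.eps_eta]
    simp [bd]
  | succ d ih =>
    intro p S hS
    have hne : S.Nonempty := Finset.card_pos.mp (by omega)
    have hc : ∀ a ∈ S, (S.erase a).card = d := fun a ha => by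
      rw [Finset.card_erase_of_mem ha, hS]; rfl
    rw [phi_nonempty C lab p hne, C.eps_cone]
    refine ⟨?_, by simp⟩
    apply C.d_cone
    · rw [map_bd, bd_congr (ω' := bd (phi C lab)) (fun q a ha => (ih q _ (hc a ha)).1), bd_bd]
    · rw [map_bd]
      refine Finset.sum_eq_zero fun a ha => ?_
      beta_reduce
      rw [(ih _ _ (hc a ha)).2, (ih _ _ (hc a ha)).2, sub_self, smul_zero]

lemma phi_d (p : ι → ℕ) (S : Finset ι) : C.d (phi C lab p S) = bd (phi C lab) p S :=
  (phi_chain C lab _ p S rfl).1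

lemma eps_phi_empty (p : ι → ℕ) : C.eps (phi C lab p ∅) = 1 := by
  simpa using (phi_chain C lab _ p ∅ rfl).2

/-- A cell lying in one of the first `|S|` members of the cover is killed: the cone over a face
with the same label vanishes, and the other faces lie in an earlier member. -/
lemma phi_vanish (col : (ι → ℕ) → Finset ι → ℕ)
    (hface : ∀ p S, ∀ a ∈ S, ∀ q, q = p ∨ q = p + Pi.single a 1 → col q (S.erase a) ≤ col p S ∧
      (col q (S.erase a) = col p S → lab q (S.erase a) = lab p S)) (d : ℕ) :
    ∀ p S, S.card = d → col p S < d → phi C lab p S = 0 := by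
  induction d with
  | zero => intro p S _ h; omega
  | succ d ih =>
    intro p S hS hcol
    have hne : S.Nonempty := Finset.card_pos.mp (by omega)
    have hc : ∀ a ∈ S, (S.erase a).card = d := fun a ha => by
      rw [Finset.card_erase_of_mem ha, hS]; rfl
    have key : ∀ a ∈ S, ∀ q, q = p ∨ q = p + Pi.single a 1 →
        C.cone (lab p S) (phi C lab q (S.erase a)) = 0 := by
      intro a ha q hq
      obtain ⟨h1, h2⟩ := hface p S a ha q hq
      by_cases h : col q (S.erase a) < d
      · rw [ih _ _ (hc a ha) h, map_zero]
      · have h3 : col q (S.erase a) = col p S := by omega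
        rw [← h2 h3]
        rcases (S.erase a).eq_empty_or_nonempty with h4 | h4
        · rw [h4, phi_empty, C.cone_eta]
        · rw [phi_nonempty C lab q h4, C.cone_cone]
    rw [phi_nonempty C lab p hne, bd, map_sum]
    refine Finset.sum_eq_zero fun a ha => ?_
    rw [map_zsmul, map_sub, key a ha _ (Or.inr rfl), key a ha _ (Or.inl rfl), sub_self, smul_zero]

/-- If translation by `v` adds `g` to the labels of all cells of a subcomplex `K`, it acts on their
images by `g`. -/
lemma phi_shift (K : (ι → ℕ) → Finset ι → Prop)
    (hK : ∀ p S, K p S → ∀ a ∈ S, K p (S.erase a) ∧ K (p + Pi.single a 1) (S.erase a))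
    (v : ι → ℕ) (g : Fin κ → ZMod m) (hl : ∀ p S, K p S → lab (p + v) S = lab p S + g) (d : ℕ) :
    ∀ p S, S.card = d → K p S → phi C lab (p + v) S = C.act g (phi C lab p S) := by
  induction d with
  | zero =>
    intro p S hS h
    have hl' := hl p S h
    rw [Finset.card_eq_zero] at hS
    subst hS
    rw [phi_empty, phi_empty, hl', add_comm, C.act_add]
  | succ d ih =>
    intro p S hS h
    have hne : S.Nonempty := Finset.card_pos.mp (by omega)
    have hc : ∀ a ∈ S, (S.erase a).card = d := fun a ha => by
      rw [Finset.card_erase_of_mem ha, hS]; rfl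
    rw [phi_nonempty C lab p hne, phi_nonempty C lab _ hne, hl p S h, ← C.cone_act,
      map_bd (C.act g)]
    refine congrArg (C.cone (lab p S + g)) ?_
    rw [bd, bd]
    refine Finset.sum_congr rfl fun a ha => ?_
    obtain ⟨h1, h2⟩ := hK p S h a ha
    rw [← ih _ _ (hc a ha) h1, ← ih _ _ (hc a ha) h2, add_right_comm]

/-- Cells that extend along the axis `a` while sitting over the slice `p b = c`, on which the labels
do not depend on `a`, are killed. -/
lemma phi_degen (a b : ι) (hab : a ≠ b) (c : ℕ)
    (hl : ∀ p S, p b = c → b ∉ S → a ∉ S → lab (p + Pi.single a 1) S = lab p S) (d : ℕ) :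
    ∀ p S, S.card = d → p b = c → b ∉ S → a ∈ S → phi C lab p S = 0 := by
  induction d with
  | zero => intro p S hS _ _ h; simp [Finset.card_eq_zero.mp hS] at h
  | succ d ih =>
    intro p S hS hp hb ha
    have hc : ∀ a ∈ S, (S.erase a).card = d := fun a ha => by
      rw [Finset.card_erase_of_mem ha, hS]; rfl
    rw [phi_nonempty C lab p ⟨a, ha⟩]
    suffices h0 : bd (phi C lab) p S = 0 by rw [h0, map_zero]
    refine Finset.sum_eq_zero fun x hx => ?_
    by_cases hxa : x = a
    · subst hxa
      have := phi_shift C lab (fun p S => p b = c ∧ b ∉ S ∧ x ∉ S) ?_ (Pi.single x 1) 0 ?_ _ p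
        (S.erase x) rfl ⟨hp, by simp [hb], by simp⟩
      · rw [this, C.act_zero, sub_self, smul_zero]
      · rintro p S ⟨h1, h2, h3⟩ y hy
        have hyb : b ≠ y := by rintro rfl; exact h2 hy
        simp [h1, h2, h3, hyb]
      · rintro p S ⟨h1, h2, h3⟩
        rw [hl p S h1 h2 h3, add_zero]
    · have hxb : b ≠ x := by rintro rfl; exact hb hx
      have ha' : a ∈ S.erase x := by simp [ha, Ne.symm hxa]
      rw [ih p _ (hc x hx) hp (by simp [hb]) ha', ih _ _ (hc x hx) (by simp [hp, hxb]) (by simp [hb]) ha']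
      simp

end Phi

section Box
variable {ι : Type} [DecidableEq ι] [Fintype ι] {M : Type} [AddCommGroup M]

/-- The lattice points of a box with side lengths `L`. -/
def box (L : ι → ℕ) : Finset (ι → ℕ) := Fintype.piFinset fun a => Finset.range (L a)

lemma mem_box {L : ι → ℕ} {p : ι → ℕ} : p ∈ box L ↔ ∀ a, p a < L a := by simp [box]

lemma box_fiber (L : ι → ℕ) (a : ι) (G : (ι → ℕ) → M) :
    ∑ p ∈ box L, G p = ∑ p ∈ box (Function.update L a 1), ∑ t ∈ Finset.range (L a),
      G (p + Pi.single a t) := by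
  rw [← Finset.sum_product']
  symm
  refine Finset.sum_bij' (fun x _ => x.1 + Pi.single a x.2)
    (fun p _ => (Function.update p a 0, p a)) ?_ ?_ ?_ ?_ ?_
  · rintro ⟨p, t⟩ h
    simp only [Finset.mem_product, mem_box, Finset.mem_range] at h ⊢
    intro b
    have := h.1 b
    by_cases hb : b = a
    · subst hb; simp at this ⊢; omega
    · simpa [hb] using this
  · intro p h
    simp only [Finset.mem_product, mem_box, Finset.mem_range] at h ⊢
    refine ⟨fun b => ?_, h a⟩
    by_cases hb : b = a
    · subst hb; simp
    · simpa [hb] using h b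
  · rintro ⟨p, t⟩ h
    simp only [Finset.mem_product, mem_box, Finset.mem_range] at h
    have h0 := h.1 a
    simp only [Function.update_self, Nat.lt_one_iff] at h0
    ext b
    · by_cases hb : b = a
      · subst hb; simp [h0]
      · simp [hb]
    · simp [h0]
  · intro p h
    funext b
    by_cases hb : b = a
    · subst hb; simp
    · simp [hb]
  · intro p h; rfl

/-- Telescoping along the axis `a` leaves the two opposite faces of the box. -/
lemma box_tele (L : ι → ℕ) (a : ι) (G : (ι → ℕ) → M) :
    ∑ p ∈ box L, (G (p + Pi.single a 1) - G p) =
      ∑ p ∈ box (Function.update L a 1), (G (p + Pi.single a (L a)) - G p) := by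
  rw [box_fiber L a]
  refine Finset.sum_congr rfl fun p _ => ?_
  have := Finset.sum_range_sub (fun t => G (p + Pi.single a t)) (L a)
  simp only [Pi.single_zero, add_zero] at this
  rw [← this]
  refine Finset.sum_congr rfl fun t _ => ?_
  rw [add_assoc, ← Pi.single_add]

/-- A box of length `r N` along the axis `a` consists of `r` translates of a box of length `N`. -/
lemma box_blocks (L : ι → ℕ) (a : ι) (r N : ℕ) (hL : L a = N) (G : (ι → ℕ) → M) :
    ∑ p ∈ box (Function.update L a (r * N)), G p =
      ∑ b ∈ Finset.range r, ∑ p ∈ box L, G (p + Pi.single a (b * N)) := by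
  simp_rw [box_fiber L a, hL]
  rw [box_fiber _ a, Finset.sum_comm (s := Finset.range r)]
  simp only [Function.update_self, Function.update_idem]
  refine Finset.sum_congr rfl fun p _ => ?_
  induction r with
  | zero => simp
  | succ r ih =>
    rw [Nat.succ_mul, Finset.sum_range_add, ih, Finset.sum_range_succ]
    congr 1
    refine Finset.sum_congr rfl fun t _ => ?_
    rw [add_assoc, ← Pi.single_add, add_comm t]

/-- Translation along an axis whose period is the side length of the box preserves sums. -/
lemma box_periodic (L : ι → ℕ) (a : ι) (G : (ι → ℕ) → M)
    (hG : ∀ p, G (p + Pi.single a (L a)) = G p) (N : ℕ) :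
    ∑ p ∈ box L, G (p + Pi.single a N) = ∑ p ∈ box L, G p := by
  induction N with
  | zero => simp
  | succ N ih =>
    rw [← ih, ← sub_eq_zero, ← Finset.sum_sub_distrib]
    have := box_tele L a (fun p => G (p + Pi.single a N))
    rw [show ∑ p ∈ box L, (G (p + Pi.single a (N + 1)) - G (p + Pi.single a N)) =
      ∑ p ∈ box L, (G (p + Pi.single a 1 + Pi.single a N) - G (p + Pi.single a N)) from
        Finset.sum_congr rfl fun p _ => by rw [add_assoc, ← Pi.single_add, add_comm 1], this]
    refine Finset.sum_eq_zero fun p _ => ?_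
    rw [add_right_comm, hG, sub_self]

end Box

/-! ### Product cells of the power of the three-sphere -/

/-- The lattice axes: three for each factor, ordered lexicographically. -/
abbrev Ax (K : ℕ) := Fin K ×ₗ Fin 3

/-- The `x`-th axis of the factor `j`. -/
abbrev ax {K : ℕ} (j : Fin K) (x : Fin 3) : Ax K := toLex (j, x)

lemma ax_ne {K : ℕ} {j : Fin K} {x y : Fin 3} (h : x ≠ y) : ax j x ≠ ax j y := by
  intro h'; exact h (Prod.ext_iff.mp (toLex.injective h')).2

lemma sum_ax {K : ℕ} {M : Type} [AddCommMonoid M] (F : Ax K → M) :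
    ∑ a, F a = ∑ j, ∑ x, F (ax j x) := by
  rw [← Fintype.sum_prod_type' (fun j x => F (ax j x))]
  exact (Equiv.sum_comp toLex F).symm

section
variable {K : ℕ}

/-- The axes spanned by the product cell of multidegree `n`. Within a factor the axes `0`, `1`, `2`
are an angle, the radial parameter and the other angle of the join coordinates, and the cell of
degree `r` spans the first `r` of them. -/
def axes (n : Fin K → ℕ) : Finset (Ax K) :=
  Finset.univ.filter fun a => ((ofLex a).2 : ℕ) < n (ofLex a).1

lemma mem_axes {n : Fin K → ℕ} {j : Fin K} {x : Fin 3} : ax j x ∈ axes n ↔ (x : ℕ) < n j := by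
  simp [axes]

/-- Side lengths, in lattice units, of the box representing the product cell of multidegree `n`. The
first angle runs through a full turn `m N` for cells of degree `2` and `3`, and through one `m`-th of
a turn for the cell of degree `1`. -/
def len (m N : ℕ) (n : Fin K → ℕ) (a : Ax K) : ℕ :=
  if ((ofLex a).2 : ℕ) < n (ofLex a).1 then
    (if (ofLex a).2 = 0 ∧ 2 ≤ n (ofLex a).1 then m * N else N) else 1

lemma len_ax (m N : ℕ) (n : Fin K → ℕ) (j : Fin K) (x : Fin 3) : len m N n (ax j x) =
    if (x : ℕ) < n j then (if x = 0 ∧ 2 ≤ n j then m * N else N) else 1 := rfl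

lemma sgn_axes (n : Fin K → ℕ) (hn : ∀ j, n j ≤ 3) (j : Fin K) (x : Fin 3) (hx : (x : ℕ) < n j) :
    sgn (axes n) (ax j x) = (-1) ^ (∑ i ∈ Finset.Iio j, n i + (x : ℕ)) := by
  unfold sgn
  congr 1
  rw [axes, Finset.filter_filter, Finset.card_filter, sum_ax]
  have h1 : ∀ i, (∑ y : Fin 3, if ((ofLex (ax i y)).2 : ℕ) < n (ofLex (ax i y)).1 ∧ ax i y < ax j x
      then 1 else 0) = (if i < j then n i else 0) + if i = j then (x : ℕ) else 0 := by
    intro i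
    have h2 : ∀ y, ((((ofLex (ax i y)).2 : ℕ) < n (ofLex (ax i y)).1 ∧ ax i y < ax j x)) ↔
        ((y : ℕ) < n i ∧ (i < j ∨ i = j ∧ y < x)) := by
      intro y
      rw [Prod.Lex.toLex_lt_toLex]; rfl
    simp only [h2]
    rcases lt_trichotomy i j with h | h | h
    · have hni := hn i
      simp only [h, h.ne, Fin.sum_univ_three]
      simp
      interval_cases n i <;> rfl
    · subst h
      simp only [lt_irrefl, false_or, true_and, if_true, if_false, zero_add, Fin.sum_univ_three]
      have hni := hn i
      fin_cases x <;> simp at hx ⊢ <;> interval_cases n i <;> simp_all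
    · simp [h.ne', not_lt.mpr h.le]
  rw [Finset.sum_congr rfl fun i _ => h1 i, Finset.sum_add_distrib]
  congr 1
  · rw [← Finset.sum_filter]
    congr 1; ext; simp
  · simp

lemma axes_update (n : Fin K → ℕ) (j : Fin K) (x : Fin 3) (hx : n j = x + 1) :
    axes (Function.update n j (n j - 1)) = (axes n).erase (ax j x) := by
  ext a
  obtain ⟨⟨i, y⟩, rfl⟩ := toLex.surjective a
  change ax i y ∈ _ ↔ ax i y ∈ _
  rw [Finset.mem_erase, mem_axes, mem_axes]
  by_cases hi : i = j
  · subst hi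
    have : ax i y ≠ ax i x ↔ y ≠ x := ⟨fun h h' => h (by rw [h']), ax_ne⟩
    rw [this, Function.update_self, hx, Ne, Fin.ext_iff]
    omega
  · have : ax i y ≠ ax j x := fun h => hi (Prod.ext_iff.mp (toLex.injective h)).1
    simp [hi, this]

lemma axes_top (κ : ℕ) : (axes (topDeg κ)).card = 3 * κ + 2 := by
  rw [axes, Finset.card_filter, sum_ax]
  have h : ∀ i : Fin (κ + 1), (∑ y : Fin 3,
      if ((ofLex (ax i y)).2 : ℕ) < topDeg κ (ofLex (ax i y)).1 then 1 else 0) = topDeg κ i := by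
    intro i
    change (∑ y : Fin 3, if (y : ℕ) < topDeg κ i then 1 else 0) = _
    rw [Fin.sum_univ_three]
    unfold topDeg
    split_ifs <;> simp_all
  rw [Finset.sum_congr rfl fun i _ => h i, Fin.sum_univ_castSucc]
  simp [topDeg, (Fin.castSucc_lt_last _).ne]
  ring

end

section
variable {m κ : ℕ} [NeZero m] (C : Cx m κ) (N : ℕ)
  (lab : (Ax (κ + 1) → ℕ) → Finset (Ax (κ + 1)) → (Fin κ → ZMod m))

/-- The image under `phi` of the product cell of multidegree `n`, the sum over its lattice cells. -/
def fam (n : Fin (κ + 1) → ℕ) : C.M := ∑ p ∈ box (len m N n), phi C lab p (axes n)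

-- The labels are equivariant under the deck transformation of each factor (`H2`) and periodic in the
-- first angle (`H3`). They do not depend on the second angle where the radial parameter is `0` (`H4`),
-- nor on the first angle where it is `N` (`H5`), as these angles are collapsed there.
variable (H2 : ∀ p S j, lab (p + Pi.single (ax j 0) N + Pi.single (ax j 2) N) S
    = lab p S + gvec m κ j)
  (H3 : ∀ p S j, lab (p + Pi.single (ax j 0) (m * N)) S = lab p S)
  (H4 : ∀ p S j, p (ax j 1) = 0 → ax j 1 ∉ S → ax j 2 ∉ S →
    lab (p + Pi.single (ax j 2) 1) S = lab p S)
  (H5 : ∀ p S j, p (ax j 1) = N → ax j 1 ∉ S → ax j 0 ∉ S →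
    lab (p + Pi.single (ax j 0) 1) S = lab p S)

include H2 in
lemma phi_H2 (p S) (j : Fin (κ + 1)) (a : ℕ) :
    phi C lab (p + Pi.single (ax j 0) (a * N) + Pi.single (ax j 2) (a * N)) S
      = C.act (a • gvec m κ j) (phi C lab p S) := by
  induction a with
  | zero => simp [C.act_zero]
  | succ a ih =>
    rw [succ_nsmul', C.act_add, ← ih]
    rw [← phi_shift C lab (fun _ _ => True) (fun _ _ _ _ _ => ⟨trivial, trivial⟩)
      (Pi.single (ax j 0) N + Pi.single (ax j 2) N) (gvec m κ j)
      (fun p S _ => by rw [← H2, add_assoc]) _ _ S rfl trivial]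
    congr 1
    rw [Nat.succ_mul, Pi.single_add, Pi.single_add]; abel

include H3 in
lemma phi_H3 (p S) (j : Fin (κ + 1)) :
    phi C lab (p + Pi.single (ax j 0) (m * N)) S = phi C lab p S := by
  rw [phi_shift C lab (fun _ _ => True) (fun _ _ _ _ _ => ⟨trivial, trivial⟩)
    (Pi.single (ax j 0) (m * N)) 0 (fun p S _ => by rw [H3, add_zero]) _ p S rfl trivial, C.act_zero]

include H4 in
lemma phi_H4 (p S) (j : Fin (κ + 1)) (h1 : p (ax j 1) = 0) (h2 : ax j 1 ∉ S) (h3 : ax j 2 ∉ S)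
    (a : ℕ) : phi C lab (p + Pi.single (ax j 2) a) S = phi C lab p S := by
  induction a with
  | zero => simp
  | succ a ih =>
    rw [← ih, Pi.single_add, ← add_assoc]
    have h12 : ax j 1 ≠ ax j 2 := ax_ne (by decide)
    rw [phi_shift C lab (fun p S => p (ax j 1) = 0 ∧ ax j 1 ∉ S ∧ ax j 2 ∉ S) ?_
      (Pi.single (ax j 2) 1) 0 ?_ _ _ S rfl ⟨by simp [h1, h12], h2, h3⟩, C.act_zero]
    · rintro p S ⟨h1, h2, h3⟩ y hy
      have hyb : ax j 1 ≠ y := by rintro rfl; exact h2 hy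
      simp [h1, h2, h3, hyb]
    · rintro p S ⟨h1, h2, h3⟩
      rw [H4 p S j h1 h2 h3, add_zero]

include H4 in
lemma phi_deg0 (p S) (j : Fin (κ + 1)) (h1 : p (ax j 1) = 0) (h2 : ax j 1 ∉ S) (h3 : ax j 2 ∈ S) :
    phi C lab p S = 0 :=
  phi_degen C lab (ax j 2) (ax j 1) (ax_ne (by decide)) 0 (fun p S => H4 p S j) _ p S rfl h1 h2 h3

include H5 in
lemma phi_degN (p S) (j : Fin (κ + 1)) (h1 : p (ax j 1) = N) (h2 : ax j 1 ∉ S) (h3 : ax j 0 ∈ S) :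
    phi C lab p S = 0 :=
  phi_degen C lab (ax j 0) (ax j 1) (ax_ne (by decide)) N (fun p S => H5 p S j) _ p S rfl h1 h2 h3

lemma len_update (n : Fin (κ + 1) → ℕ) (j : Fin (κ + 1)) (r : ℕ) (a : Ax (κ + 1))
    (h : (ofLex a).1 ≠ j) : len m N (Function.update n j r) a = len m N n a := by
  simp [len, h]

lemma len_eq_update (n : Fin (κ + 1) → ℕ) (j : Fin (κ + 1)) (r : ℕ) (L : Ax (κ + 1) → ℕ)
    (h : ∀ i y, i ≠ j → L (ax i y) = len m N n (ax i y))
    (h' : ∀ y, len m N (Function.update n j r) (ax j y) = L (ax j y)) :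
    len m N (Function.update n j r) = L := by
  funext a
  obtain ⟨⟨i, y⟩, rfl⟩ := toLex.surjective a
  by_cases hi : i = j
  · subst hi; exact h' y
  · rw [len_update _ _ _ _ _ (show (ofLex (toLex (i, y))).1 ≠ j from hi)]; exact (h i y hi).symm

lemma update_ax_ne (L : Ax (κ + 1) → ℕ) {i j : Fin (κ + 1)} (x y : Fin 3) (v : ℕ) (hi : i ≠ j) :
    Function.update L (ax j x) v (ax i y) = L (ax i y) := by
  apply Function.update_of_ne
  intro h; exact hi (Prod.ext_iff.mp (toLex.injective h)).1

lemma update_ax (L : Ax (κ + 1) → ℕ) {j : Fin (κ + 1)} (x y : Fin 3) (v : ℕ) :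
    Function.update L (ax j x) v (ax j y) = if y = x then v else L (ax j y) := by
  by_cases h : y = x
  · subst h; simp
  · rw [Function.update_of_ne (ax_ne h), if_neg h]

/-- The contribution of the axis `a` to the boundary of a product cell. -/
def face (n : Fin (κ + 1) → ℕ) (a : Ax (κ + 1)) : C.M :=
  ∑ p ∈ box (Function.update (len m N n) a 1),
    (phi C lab (p + Pi.single a (len m N n a)) ((axes n).erase a) - phi C lab p ((axes n).erase a))

lemma fam_d (n : Fin (κ + 1) → ℕ) :
    C.d (fam C N lab n) = ∑ j, ∑ x : Fin 3,
      if (x : ℕ) < n j then sgn (axes n) (ax j x) • face C N lab n (ax j x) else 0 := by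
  rw [fam, map_sum]
  simp only [phi_d, bd]
  rw [Finset.sum_comm, axes, Finset.sum_filter, sum_ax]
  refine Finset.sum_congr rfl fun j _ => Finset.sum_congr rfl fun x _ => ?_
  change (if (x : ℕ) < n j then _ else _) = _
  congr 1
  rw [← Finset.smul_sum, box_tele _ _ (fun p => phi C lab p _)]
  rfl

include H2 H4 in
/-- The ends of the cell of degree `1` differ by the deck transformation. The shift by `N` along the
second angle in `H2` is invisible because the radial parameter is `0`. -/
lemma face_one (n : Fin (κ + 1) → ℕ) (j : Fin (κ + 1)) (hn : n j = 1) :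
    face C N lab n (ax j 0) = C.act (gvec m κ j) (fam C N lab (Function.update n j (n j - 1)))
      - fam C N lab (Function.update n j (n j - 1)) := by
  rw [fam, axes_update n j 0 (by simpa using hn), hn]
  rw [len_eq_update N n j (1 - 1) (Function.update (len m N n) (ax j 0) 1)
    (fun i y hi => update_ax_ne _ _ _ _ hi) (fun y => by
      rw [update_ax, len_ax, len_ax]; simp [hn]
      intro h1 h2; omega)]
  rw [map_sum, ← Finset.sum_sub_distrib, face]
  refine Finset.sum_congr rfl fun p hp => ?_
  congr 1
  have hp1 : p (ax j 1) = 0 := by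
    have := mem_box.mp hp (ax j 1)
    rw [update_ax, len_ax] at this
    simpa [hn] using this
  rw [len_ax]
  simp only [hn, Fin.val_zero, zero_lt_one, if_true]
  have h01 : ax j 1 ≠ ax j 0 := ax_ne (by decide)
  have h := phi_H2 C N lab H2 p ((axes n).erase (ax j 0)) j 1
  rw [one_smul, one_mul, phi_H4 C lab H4 _ _ j (by simp [hp1, h01])
    (by simp [mem_axes, hn]) (by simp [mem_axes, hn])] at h
  simpa using h

include H3 in
/-- A full turn closes up. -/
lemma face_zero (n : Fin (κ + 1) → ℕ) (j : Fin (κ + 1)) (hn : 2 ≤ n j) :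
    face C N lab n (ax j 0) = 0 := by
  refine Finset.sum_eq_zero fun p _ => ?_
  have h : len m N n (ax j 0) = m * N := by
    rw [len_ax]; simp [hn]; omega
  rw [h, phi_H3 C N lab H3, sub_self]

include H2 H4 H5 in
/-- The boundary of the cell of degree `2` is a full turn at radial parameter `0`, that is `m`
translates of the cell of degree `1`; at the other end the angle is collapsed. -/
lemma face_two (n : Fin (κ + 1) → ℕ) (j : Fin (κ + 1)) (hn : n j = 2) :
    face C N lab n (ax j 1) = - ∑ a ∈ Finset.range m,
      C.act (a • gvec m κ j) (fam C N lab (Function.update n j (n j - 1))) := by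
  have h01 : ax j 1 ≠ ax j 0 := ax_ne (by decide)
  have h12 : ax j 1 ≠ ax j 2 := ax_ne (by decide)
  have hl : Function.update (len m N n) (ax j 1) 1 =
      Function.update (len m N (Function.update n j (n j - 1))) (ax j 0) (m * N) := by
    symm
    rw [← Function.update_eq_self (ax j 0) (Function.update (len m N n) (ax j 1) 1)]
    rw [len_eq_update N n j (n j - 1)
      (Function.update (Function.update (len m N n) (ax j 1) 1) (ax j 0) N)
    (fun i y hi => by rw [update_ax_ne _ _ _ _ hi, update_ax_ne _ _ _ _ hi]) (fun y => by
      rw [update_ax, update_ax, len_ax, len_ax]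
      fin_cases y <;> simp [hn])]
    rw [Function.update_idem]
    congr 1
    rw [update_ax, len_ax]; simp [hn]
  rw [face, hl, box_blocks _ (ax j 0) m N (by rw [len_ax]; simp [hn]), ← Finset.sum_neg_distrib]
  refine Finset.sum_congr rfl fun a _ => ?_
  rw [fam, axes_update n j 1 (by simpa using hn), map_sum, ← Finset.sum_neg_distrib]
  refine Finset.sum_congr rfl fun p hp => ?_
  have hp1 : p (ax j 1) = 0 := by
    have := mem_box.mp hp (ax j 1)
    rw [len_ax] at this
    simpa [hn] using this
  rw [phi_degN C N lab H5 _ _ j (by rw [len_ax]; simp [hp1, h01, hn]) (by simp)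
    (by simp [mem_axes, hn, h01.symm]), zero_sub]
  congr 1
  have h := phi_H2 C N lab H2 p ((axes n).erase (ax j 1)) j a
  rw [phi_H4 C lab H4 _ _ j (by simp [hp1, h01]) (by simp) (by simp [mem_axes, hn])] at h
  exact h

include H4 H5 in
/-- At each end of the radial parameter one of the two angles spanned by the cell of degree `3` is
collapsed. -/
lemma face_three_one (n : Fin (κ + 1) → ℕ) (j : Fin (κ + 1)) (hn : n j = 3) :
    face C N lab n (ax j 1) = 0 := by
  have h01 : ax j 1 ≠ ax j 0 := ax_ne (by decide)
  have h12 : ax j 1 ≠ ax j 2 := ax_ne (by decide)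
  refine Finset.sum_eq_zero fun p hp => ?_
  have hp1 : p (ax j 1) = 0 := by
    have := mem_box.mp hp (ax j 1)
    rw [update_ax] at this
    simpa [hn] using this
  rw [phi_degN C N lab H5 _ _ j (by rw [len_ax]; simp [hp1, hn]) (by simp)
    (by simp [mem_axes, hn, h01.symm]),
    phi_deg0 C lab H4 _ _ j hp1 (by simp) (by simp [mem_axes, hn, h12.symm]), sub_self]

include H2 H3 in
/-- The ends of the cell of degree `3` in the second angle differ by the deck transformation. The
accompanying shift of the first angle is absorbed by its periodicity. -/
lemma face_three (n : Fin (κ + 1) → ℕ) (j : Fin (κ + 1)) (hn : n j = 3) :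
    face C N lab n (ax j 2) = C.act (gvec m κ j) (fam C N lab (Function.update n j (n j - 1)))
      - fam C N lab (Function.update n j (n j - 1)) := by
  have hl : Function.update (len m N n) (ax j 2) 1 = len m N (Function.update n j (n j - 1)) := by
    symm
    refine len_eq_update N n j (n j - 1) _
      (fun i y hi => update_ax_ne _ _ _ _ hi) (fun y => ?_)
    rw [update_ax, len_ax, len_ax]
    fin_cases y <;> simp [hn]
  rw [face, hl, fam, axes_update n j 2 (by simpa using hn), Finset.sum_sub_distrib]
  congr 1
  have hN : len m N n (ax j 2) = N := by rw [len_ax]; simp [hn]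
  rw [hN]
  have hper := box_periodic (len m N (Function.update n j (n j - 1))) (ax j 0)
    (fun p : Ax (κ + 1) → ℕ =>
      phi C lab (p + Pi.single (ax j 2) N) ((axes n).erase (ax j 2))) (fun p => by
    have : len m N (Function.update n j (n j - 1)) (ax j 0) = m * N := by
      rw [len_ax]; simp [hn]
    rw [this, add_right_comm, phi_H3 C N lab H3]) N
  refine hper.symm.trans ?_
  rw [map_sum]
  refine Finset.sum_congr rfl fun p hp => ?_
  have h := phi_H2 C N lab H2 p ((axes n).erase (ax j 2)) j 1
  rw [one_smul, one_mul] at h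
  exact h

include H2 H3 H4 H5 in
/-- The product cells are the equivariant cells of the power of the sphere whose chain complex is the
tensor power of the periodic resolution truncated at degree `3`. -/
lemma fam_rel : C.Rel (fam C N lab) := by
  intro n hn
  rw [fam_d]
  refine Finset.sum_congr rfl fun j _ => ?_
  have hs : ∀ x : Fin 3, (if (x : ℕ) < n j then sgn (axes n) (ax j x) • face C N lab n (ax j x)
      else 0) = (-1 : ℤ) ^ (∑ i ∈ Finset.Iio j, n i) • (if (x : ℕ) < n j then
        (-1 : ℤ) ^ (x : ℕ) • face C N lab n (ax j x) else 0) := by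
    intro x
    split_ifs with h
    · rw [sgn_axes n hn j x h, pow_add, mul_smul]
    · simp
  rw [Finset.sum_congr rfl fun x _ => hs x, ← Finset.smul_sum]
  congr 1
  have hj := hn j
  rw [Fin.sum_univ_three]
  obtain h | h | h | h : n j = 0 ∨ n j = 1 ∨ n j = 2 ∨ n j = 3 := by omega
  · simp [h, Cx.Dop_zero]
  · rw [C.Dop_odd _ (by rw [h]; decide), ← face_one C N lab H2 H4 n j h]
    simp [h]
  · rw [C.Dop_even _ (by rw [h]; decide) (by omega)]
    rw [face_zero C N lab H3 n j h.ge, face_two C N lab H2 H4 H5 n j h]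
    simp [h]
  · rw [C.Dop_odd _ (by rw [h]; decide), ← face_three C N lab H2 H3 n j h]
    rw [face_zero C N lab H3 n j (by omega), face_three_one C N lab H4 H5 n j h]
    simp [h]

end

/-- A coloring of the cells of the lattice whose labels are constant along incident cells of the same
color (`H1`), equivariant (`H2`) and compatible with the join coordinates (`H3`, `H4`, `H5`) uses at
least `3 (κ + 2)` colors. -/
theorem lattice_main (κ m N r : ℕ) [NeZero m] (hm : 3 ≤ m)
    (col : (Ax (κ + 2) → ℕ) → Finset (Ax (κ + 2)) → ℕ)
    (lab : (Ax (κ + 2) → ℕ) → Finset (Ax (κ + 2)) → (Fin (κ + 1) → ZMod m))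
    (H1 : ∀ p S, ∀ a ∈ S, ∀ q, q = p ∨ q = p + Pi.single a 1 → col q (S.erase a) ≤ col p S ∧
      (col q (S.erase a) = col p S → lab q (S.erase a) = lab p S))
    (H2 : ∀ p S j, lab (p + Pi.single (ax j 0) N + Pi.single (ax j 2) N) S
      = lab p S + gvec m (κ + 1) j)
    (H3 : ∀ p S j, lab (p + Pi.single (ax j 0) (m * N)) S = lab p S)
    (H4 : ∀ p S j, p (ax j 1) = 0 → ax j 1 ∉ S → ax j 2 ∉ S →
      lab (p + Pi.single (ax j 2) 1) S = lab p S)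
    (H5 : ∀ p S j, p (ax j 1) = N → ax j 1 ∉ S → ax j 0 ∉ S →
      lab (p + Pi.single (ax j 0) 1) S = lab p S)
    (H6 : ∀ p S, col p S < r) : 3 * (κ + 2) ≤ r := by
  by_contra hr
  have h1 := alg_main κ (fam (cx m (κ + 1)) N lab) (fam_rel _ N lab H2 H3 H4 H5) (by
    refine Finset.sum_eq_zero fun p _ => ?_
    refine phi_vanish _ lab col H1 _ p _ rfl ?_
    have := axes_top (κ + 1)
    have := H6 p (axes (topDeg (κ + 1)))
    omega)
  have h0 : axes (0 : Fin (κ + 2) → ℕ) = ∅ := by ext a; simp [axes]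
  have hb : box (len m N (0 : Fin (κ + 2) → ℕ)) = {0} := by
    ext p; rw [mem_box]
    simp only [len, Pi.zero_apply, Nat.not_lt_zero, if_false, Nat.lt_one_iff, Finset.mem_singleton]
    exact funext_iff.symm
  rw [fam, hb, h0, Finset.sum_singleton, eps_phi_empty, mul_one] at h1
  have h2 : ((2 : ℕ) : ZMod m) = 0 := by exact_mod_cast h1
  rw [ZMod.natCast_eq_zero_iff] at h2
  have := Nat.le_of_dvd (by norm_num) h2
  omega

/-! ### The lattice parametrization of the power of the three-sphere -/

/-- The three-dimensional sphere. -/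
abbrev S3 := Metric.sphere (0 : EuclideanSpace ℂ (Fin 2)) 1

lemma S3.ext {x y : S3} (h : ∀ i, x.1 i = y.1 i) : x = y :=
  Subtype.ext (PiLp.ext h)

lemma mem_S3 (x : EuclideanSpace ℂ (Fin 2)) : x ∈ Metric.sphere (0 : EuclideanSpace ℂ (Fin 2)) 1 ↔
    ‖x 0‖ ^ 2 + ‖x 1‖ ^ 2 = 1 := by
  rw [mem_sphere_zero_iff_norm, EuclideanSpace.norm_eq, Real.sqrt_eq_one, Fin.sum_univ_two]

/-- The scalar action of a unit complex number on the sphere. -/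
def rot (z : Circle) (x : S3) : S3 :=
  ⟨(z : ℂ) • x.1, by
    have := x.2
    rw [mem_S3] at this ⊢
    simpa [Circle.norm_coe] using this⟩

@[simp] lemma rot_apply (z : Circle) (x : S3) (i : Fin 2) : (rot z x).1 i = z * x.1 i := rfl

/-- The join coordinates of the sphere: two angles `a`, `c` and a radial parameter `b`, in circle
form. -/
noncomputable def joinC (v : Circle × Circle × Circle) : S3 :=
  ⟨!₂[((v.2.1 : ℂ).re : ℂ) * v.1, ((v.2.1 : ℂ).im : ℂ) * v.2.2], by
    rw [mem_S3]
    have : ‖(v.2.1 : ℂ)‖ ^ 2 = 1 := by simp [Circle.norm_coe]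
    rw [← Complex.normSq_eq_norm_sq, Complex.normSq_apply] at this
    simp [Circle.norm_coe]
    nlinarith⟩

lemma continuous_joinC : Continuous joinC := by
  unfold joinC
  refine Continuous.subtype_mk ((PiLp.continuous_toLp 2 _).comp ?_) _
  refine continuous_pi fun i => ?_
  fin_cases i <;> simp <;> fun_prop

lemma uniformContinuous_circleExp : UniformContinuous (Circle.exp : ℝ → Circle) := by
  refine LipschitzWith.uniformContinuous (K := 1) (LipschitzWith.of_dist_le_mul fun x y => ?_)
  change dist (Circle.exp x : ℂ) (Circle.exp y : ℂ) ≤ _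
  rw [Circle.coe_exp, Circle.coe_exp, NNReal.coe_one, one_mul, dist_eq_norm, Real.dist_eq]
  have h : Complex.exp (x * Complex.I) - Complex.exp (y * Complex.I) =
      Complex.exp (y * Complex.I) * (Complex.exp (Complex.I * ((x - y : ℝ) : ℂ)) - 1) := by
    rw [mul_sub, ← Complex.exp_add]; push_cast; ring_nf
  rw [h, norm_mul, Complex.norm_exp_ofReal_mul_I, one_mul]
  exact Real.norm_exp_I_mul_ofReal_sub_one_le

section
variable (κ m N : ℕ)

/-- The lattice parametrization of the product of spheres. -/
noncomputable def Psi (t : Ax κ → ℝ) (j : Fin κ) : S3 :=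
  joinC (Circle.exp (2 * Real.pi * (t (ax j 0) / m)), Circle.exp (Real.pi / 2 * t (ax j 1)),
    Circle.exp (2 * Real.pi * (t (ax j 2) / m)))

lemma uniformContinuous_Psi : UniformContinuous (Psi κ m) := by
  refine uniformContinuous_pi.mpr fun j => ?_
  refine (CompactSpace.uniformContinuous_of_continuous continuous_joinC).comp ?_
  have h : ∀ (c : ℝ) (a : Ax κ), UniformContinuous fun t : Ax κ → ℝ => Circle.exp (c * t a) :=
    fun c a => uniformContinuous_circleExp.comp
      (((lipschitzWith_smul c).uniformContinuous).comp (Pi.uniformContinuous_proj _ a))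
  have h1 : ∀ (a : Ax κ), UniformContinuous fun t : Ax κ → ℝ =>
      Circle.exp (2 * Real.pi * (t a / m)) := fun a => by
    have : (fun t : Ax κ → ℝ => Circle.exp (2 * Real.pi * (t a / m))) =
        fun t => Circle.exp (2 * Real.pi / m * t a) := by ext t; congr 2; ring
    rw [this]
    exact h _ _
  exact (h1 _).prodMk ((h _ _).prodMk (h1 _))


variable {κ}

/-- The cell with least corner `p` and edge directions `S`. -/
def cell (p : Ax κ → ℕ) (S : Finset (Ax κ)) : Set (Ax κ → ℝ) :=
  Set.univ.pi fun a => Set.Icc (p a : ℝ) (p a + if a ∈ S then 1 else 0)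

lemma mem_cell {p : Ax κ → ℕ} {S : Finset (Ax κ)} {t : Ax κ → ℝ} :
    t ∈ cell p S ↔ ∀ a, (p a : ℝ) ≤ t a ∧ t a ≤ p a + if a ∈ S then 1 else 0 := by
  simp only [cell, Set.mem_univ_pi, Set.mem_Icc]

lemma corner_mem (p : Ax κ → ℕ) (S : Finset (Ax κ)) : (fun a => (p a : ℝ)) ∈ cell p S := by
  rw [mem_cell]
  intro a
  split_ifs <;> simp

lemma isPreconnected_cell (p : Ax κ → ℕ) (S : Finset (Ax κ)) : IsPreconnected (cell p S) :=
  isPreconnected_univ_pi fun _ => isPreconnected_Icc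

lemma cell_erase (p : Ax κ → ℕ) (S : Finset (Ax κ)) (a : Ax κ) (ha : a ∈ S) (q : Ax κ → ℕ)
    (hq : q = p ∨ q = p + Pi.single a 1) : cell q (S.erase a) ⊆ cell p S := by
  intro t ht
  rw [mem_cell] at ht ⊢
  intro b
  have h := ht b
  rcases eq_or_ne b a with rfl | hb
  · rcases hq with rfl | rfl
    · simp [ha] at h ⊢
      constructor <;> linarith
    · simp [ha] at h ⊢
      constructor <;> linarith
  · rcases hq with rfl | rfl <;> simpa [hb] using h

/-- The parametrization with mesh `1 / N`. -/
noncomputable def PsiN (t : Ax κ → ℝ) : Fin κ → S3 := Psi κ m fun a => t a / N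

variable (V : ℕ → Set (Fin κ → S3))

/-- The color of a cell: the first member of the cover containing its image. -/
noncomputable def colr (p : Ax κ → ℕ) (S : Finset (Ax κ)) : ℕ :=
  sInf {i | ∀ t ∈ cell p S, PsiN m N t ∈ V i}

lemma continuous_PsiN : Continuous (PsiN (κ := κ) m N) :=
  (uniformContinuous_Psi κ m).continuous.comp (by fun_prop)

/-- For a fine enough mesh every cell is mapped into a member of the cover. -/
lemma exists_mesh (r : ℕ) (hV : ∀ i, IsOpen (V i)) (hc : ∀ x, ∃ i < r, x ∈ V i) :
    ∃ N : ℕ, 0 < N ∧ ∀ p S, ∃ i < r, ∀ t ∈ cell p S, PsiN m N t ∈ V i := by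
  obtain ⟨δ, hδ, h⟩ := lebesgue_number_lemma_of_metric (s := Set.univ)
    (c := fun i : Fin r => V i) isCompact_univ (fun i => hV i) (fun x _ => by
      obtain ⟨i, hi, hx⟩ := hc x
      exact Set.mem_iUnion.mpr ⟨⟨i, hi⟩, hx⟩)
  obtain ⟨ε, hε, hu⟩ := Metric.uniformContinuous_iff.mp (uniformContinuous_Psi κ m) δ hδ
  obtain ⟨n, hn⟩ := exists_nat_one_div_lt hε
  refine ⟨n + 1, n.succ_pos, fun p S => ?_⟩
  obtain ⟨i, hi⟩ := h (PsiN m (n + 1) fun a => (p a : ℝ)) trivial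
  refine ⟨i, i.2, fun t ht => hi ?_⟩
  rw [Metric.mem_ball]
  refine hu (LE.le.trans_lt ?_ hn)
  refine (dist_pi_le_iff (r := 1 / ((n : ℝ) + 1)) (by positivity)).mpr fun a => ?_
  have := mem_cell.mp ht a
  rw [Real.dist_eq, ← sub_div, abs_div]
  have h2 : |(((n + 1 : ℕ) : ℝ))| = (n : ℝ) + 1 := by
    rw [abs_of_nonneg (by positivity)]; push_cast; rfl
  rw [h2]
  gcongr
  rw [abs_le]
  split_ifs at this <;> constructor <;> linarith

variable {m N V}

lemma PsiN_add_both (hN : 0 < N) (t : Ax κ → ℝ) (j : Fin κ) :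
    PsiN m N (t + Pi.single (ax j 0) (N : ℝ) + Pi.single (ax j 2) (N : ℝ)) =
      Function.update (PsiN m N t) j (rot (Circle.exp (2 * Real.pi / m)) (PsiN m N t j)) := by
  have hN' : (N : ℝ) ≠ 0 := by positivity
  have h01 : ax j 0 ≠ ax j 1 := ax_ne (by decide)
  have h02 : ax j 0 ≠ ax j 2 := ax_ne (by decide)
  have h12 : ax j 1 ≠ ax j 2 := ax_ne (by decide)
  have e : ∀ u : ℝ, Circle.exp (2 * Real.pi * ((u + N) / N / m)) =
      Circle.exp (2 * Real.pi / m) * Circle.exp (2 * Real.pi * (u / N / m)) := fun u => by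
    rw [← Circle.exp_add]; congr 1; field_simp; ring
  funext i
  rcases eq_or_ne i j with rfl | hi
  · rw [Function.update_self]
    simp only [PsiN, Psi, Pi.add_apply, Pi.single_eq_same,
      Pi.single_eq_of_ne h02, Pi.single_eq_of_ne h01.symm, Pi.single_eq_of_ne h02.symm,
      Pi.single_eq_of_ne h12, add_zero, e]
    refine S3.ext fun x => ?_
    rw [rot_apply]
    fin_cases x <;> simp [joinC] <;> ring
  · have hx : ∀ x y, ax i x ≠ ax j y := fun x y h => hi (Prod.ext_iff.mp (toLex.injective h)).1
    rw [Function.update_of_ne hi]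
    simp only [PsiN, Psi, Pi.add_apply, Pi.single_eq_of_ne (hx _ _), add_zero]

lemma PsiN_congr (t t' : Ax κ → ℝ) (j : Fin κ)
    (h : ∀ i ≠ j, ∀ x, t' (ax i x) = t (ax i x))
    (hj : PsiN m N t' j = PsiN m N t j) : PsiN m N t' = PsiN m N t := by
  funext i
  rcases eq_or_ne i j with rfl | hi
  · exact hj
  · simp only [PsiN, Psi, h i hi]

lemma PsiN_period [NeZero m] (hN : 0 < N) (t : Ax κ → ℝ) (j : Fin κ) :
    PsiN m N (t + Pi.single (ax j 0) ((m * N : ℕ) : ℝ)) = PsiN m N t := by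
  have hN' : (N : ℝ) ≠ 0 := by positivity
  have hm' : (m : ℝ) ≠ 0 := by exact_mod_cast NeZero.ne m
  have h01 : ax j 0 ≠ ax j 1 := ax_ne (by decide)
  have h02 : ax j 0 ≠ ax j 2 := ax_ne (by decide)
  refine PsiN_congr _ _ j (fun i hi x => ?_) ?_
  · have hx : ∀ x y, ax i x ≠ ax j y := fun x y h => hi (Prod.ext_iff.mp (toLex.injective h)).1
    simp [Pi.single_eq_of_ne (hx _ _)]
  · have e : ∀ u : ℝ, Circle.exp (2 * Real.pi * ((u + (m * N : ℕ)) / N / m)) =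
        Circle.exp (2 * Real.pi * (u / N / m)) := fun u => by
      rw [← Circle.periodic_exp (2 * Real.pi * (u / N / m))]; congr 1; push_cast; field_simp
    simp only [PsiN, Psi, Pi.add_apply, Pi.single_eq_same,
      Pi.single_eq_of_ne h01.symm, Pi.single_eq_of_ne h02.symm, add_zero, e]

lemma PsiN_zero (t : Ax κ → ℝ) (j : Fin κ) (h0 : t (ax j 1) = 0) (v : ℝ) :
    PsiN m N (t + Pi.single (ax j 2) v) = PsiN m N t := by
  have h12 : ax j 1 ≠ ax j 2 := ax_ne (by decide)
  have h02 : ax j 0 ≠ ax j 2 := ax_ne (by decide)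
  refine PsiN_congr _ _ j (fun i hi x => ?_) ?_
  · have hx : ∀ x y, ax i x ≠ ax j y := fun x y h => hi (Prod.ext_iff.mp (toLex.injective h)).1
    simp [Pi.single_eq_of_ne (hx _ _)]
  · simp only [PsiN, Psi, Pi.add_apply, Pi.single_eq_of_ne h12, Pi.single_eq_of_ne h02, add_zero,
      h0]
    refine S3.ext fun x => ?_
    fin_cases x <;> simp [joinC]

lemma PsiN_one (hN : 0 < N) (t : Ax κ → ℝ) (j : Fin κ) (h0 : t (ax j 1) = N) (v : ℝ) :
    PsiN m N (t + Pi.single (ax j 0) v) = PsiN m N t := by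
  have hN' : (N : ℝ) ≠ 0 := by positivity
  have h01 : ax j 1 ≠ ax j 0 := ax_ne (by decide)
  have h02 : ax j 2 ≠ ax j 0 := ax_ne (by decide)
  refine PsiN_congr _ _ j (fun i hi x => ?_) ?_
  · have hx : ∀ x y, ax i x ≠ ax j y := fun x y h => hi (Prod.ext_iff.mp (toLex.injective h)).1
    simp [Pi.single_eq_of_ne (hx _ _)]
  · simp only [PsiN, Psi, Pi.add_apply, Pi.single_eq_of_ne h01, Pi.single_eq_of_ne h02, add_zero,
      h0]
    refine S3.ext fun x => ?_
    fin_cases x <;> simp [joinC, hN']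

lemma cell_shift {p : Ax κ → ℕ} {S : Finset (Ax κ)} (b : Ax κ) (v : ℕ) {t : Ax κ → ℝ} :
    t + Pi.single b (v : ℝ) ∈ cell (p + Pi.single b v) S ↔ t ∈ cell p S := by
  rw [mem_cell, mem_cell]
  refine forall_congr' fun a => ?_
  rcases eq_or_ne a b with rfl | h
  · simp; intro _; constructor <;> intro h <;> linarith
  · simp [h]

lemma colr_shift {p : Ax κ → ℕ} {S : Finset (Ax κ)} (b : Ax κ) (v : ℕ)
    (h : ∀ t ∈ cell p S, ∀ i, PsiN m N (t + Pi.single b (v : ℝ)) ∈ V i ↔ PsiN m N t ∈ V i) :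
    colr m N V (p + Pi.single b v) S = colr m N V p S := by
  unfold colr
  congr 1
  ext i
  constructor
  · intro H t ht
    exact (h t ht i).mp (H _ ((cell_shift b v).mpr ht))
  · intro H t ht
    have : t = (t - Pi.single b (v : ℝ)) + Pi.single b (v : ℝ) := by simp
    rw [this] at ht ⊢
    rw [cell_shift] at ht
    exact (h _ ht i).mpr (H _ ht)

end

/-- An open cover of the product of spheres, invariant under the rotations of the factors and
carrying locally constant equivariant labels, has at least `3 (κ + 2)` members. -/
theorem cover_bound (κ m r : ℕ) (hm : 3 ≤ m) (V : ℕ → Set (Fin (κ + 2) → S3))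
    (hV : ∀ i, IsOpen (V i)) (hc : ∀ x, ∃ i < r, x ∈ V i)
    (hinv : ∀ i x j, Function.update x j (rot (Circle.exp (2 * Real.pi / m)) (x j)) ∈ V i ↔
      x ∈ V i)
    (L : ℕ → (Fin (κ + 2) → S3) → (Fin (κ + 1) → ZMod m))
    (hL : ∀ i K, IsPreconnected K → K ⊆ V i → ∀ x ∈ K, ∀ y ∈ K, L i x = L i y)
    (hT : ∀ i, ∀ x ∈ V i, ∀ j,
      L i (Function.update x j (rot (Circle.exp (2 * Real.pi / m)) (x j))) =
        L i x + gvec m (κ + 1) j) : 3 * (κ + 2) ≤ r := by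
  have : NeZero m := ⟨by omega⟩
  obtain ⟨N, hN, hcell⟩ := exists_mesh m V r hV hc
  have hcol : ∀ p S, ∀ t ∈ cell p S, PsiN m N t ∈ V (colr m N V p S) := fun p S => by
    obtain ⟨i, _, hi⟩ := hcell p S
    exact Nat.sInf_mem (s := {i | ∀ t ∈ cell p S, PsiN m N t ∈ V i}) ⟨i, hi⟩
  refine lattice_main κ m N r hm (colr m N V)
    (fun p S => L (colr m N V p S) (PsiN m N fun a => (p a : ℝ))) ?_ ?_ ?_ ?_ ?_ ?_
  · intro p S a ha q hq
    have hsub := cell_erase p S a ha q hq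
    refine ⟨Nat.sInf_le fun t ht => hcol p S t (hsub ht), fun h => ?_⟩
    rw [h]
    refine hL _ (PsiN m N '' cell p S)
      ((isPreconnected_cell p S).image _ (continuous_PsiN m N).continuousOn) ?_ _
      ⟨_, hsub (corner_mem _ _), rfl⟩ _ ⟨_, corner_mem _ _, rfl⟩
    rintro _ ⟨t, ht, rfl⟩
    exact hcol p S t ht
  · intro p S j
    have h1 : colr m N V (p + Pi.single (ax j 0) N + Pi.single (ax j 2) N) S =
        colr m N V p S := by
      unfold colr
      congr 1
      ext i
      have key : ∀ t, PsiN m N (t + Pi.single (ax j 0) (N : ℝ) + Pi.single (ax j 2) (N : ℝ)) ∈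
          V i ↔ PsiN m N t ∈ V i := fun t => by
        rw [PsiN_add_both hN]; exact hinv _ _ _
      constructor
      · intro H t ht
        exact (key t).mp (H _ ((cell_shift _ _).mpr ((cell_shift _ _).mpr ht)))
      · intro H t ht
        have : t = (t - Pi.single (ax j 2) (N : ℝ) - Pi.single (ax j 0) (N : ℝ)) +
          Pi.single (ax j 0) (N : ℝ) + Pi.single (ax j 2) (N : ℝ) := by simp
        rw [this] at ht ⊢
        rw [cell_shift, cell_shift] at ht
        exact (key _).mpr (H _ ht)
    simp only [h1]
    rw [← hT _ _ (hcol p S _ (corner_mem p S)), ← PsiN_add_both hN]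
    congr 2
    funext a
    simp [Pi.single_apply, apply_ite (Nat.cast : ℕ → ℝ)]
  · intro p S j
    have h1 := colr_shift (V := V) (p := p) (S := S) (ax j 0) (m * N) (m := m) (N := N)
      (fun t _ i => by rw [PsiN_period hN])
    simp only [h1]
    rw [← PsiN_period hN (fun a => (p a : ℝ)) j]
    congr 2
    funext a
    simp [Pi.single_apply, apply_ite (Nat.cast : ℕ → ℝ)]
  · intro p S j hp h1S h2S
    have ht : ∀ t ∈ cell p S, t (ax j 1) = 0 := fun t ht => by
      have := mem_cell.mp ht (ax j 1)
      simp [hp, h1S] at this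
      linarith
    have h1 := colr_shift (V := V) (p := p) (S := S) (ax j 2) 1 (m := m) (N := N)
      (fun t h i => by rw [PsiN_zero t j (ht t h)])
    simp only [h1]
    rw [← PsiN_zero (fun a => (p a : ℝ)) j (by simp [hp]) 1]
    congr 2
    funext a
    simp [Pi.single_apply, apply_ite (Nat.cast : ℕ → ℝ)]
  · intro p S j hp h1S h2S
    have ht : ∀ t ∈ cell p S, t (ax j 1) = N := fun t ht => by
      have := mem_cell.mp ht (ax j 1)
      simp [hp, h1S] at this
      linarith
    have h1 := colr_shift (V := V) (p := p) (S := S) (ax j 0) 1 (m := m) (N := N)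
      (fun t h i => by rw [PsiN_one hN t j (ht t h)])
    simp only [h1]
    rw [← PsiN_one hN (fun a => (p a : ℝ)) j (by simp [hp]) 1]
    congr 2
    funext a
    simp [Pi.single_apply, apply_ite (Nat.cast : ℕ → ℝ)]
  · intro p S
    obtain ⟨i, hi, h⟩ := hcell p S
    exact (Nat.sInf_le (s := {i | ∀ t ∈ cell p S, PsiN m N t ∈ V i}) h).trans_lt hi

/-! ### The covering of the lens space and the labels of a section -/

section
variable {m : ℕ} [NeZero m]

lemma rot_mul (z w : Circle) (x : S3) : rot (z * w) x = rot z (rot w x) :=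
  S3.ext fun i => by simp [mul_assoc]

lemma rot_one (x : S3) : rot 1 x = x := S3.ext fun i => by simp

lemma rot_injective {z w : Circle} {x : S3} (h : rot z x = rot w x) : z = w := by
  have hi : ∃ i, x.1 i ≠ 0 := by
    by_contra! hx
    have := (mem_S3 x.1).mp x.2
    simp [hx] at this
  obtain ⟨i, hi⟩ := hi
  have := congrArg (fun y : S3 => y.1 i) h
  simp only [rot_apply] at this
  exact Circle.ext (mul_right_cancel₀ hi this)

lemma continuous_rot (z : Circle) : Continuous (rot z) :=
  Continuous.subtype_mk (continuous_subtype_val.const_smul (z : ℂ)) _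

/-- The integers modulo `m` act on the sphere by rotation through multiples of `2 π / m`. -/
noncomputable instance : AddAction (ZMod m) S3 where
  vadd a x := rot (ZMod.toCircle a) x
  zero_vadd x := by
    change rot (ZMod.toCircle 0) x = x
    rw [AddChar.map_zero_eq_one, rot_one]
  add_vadd a b x := by
    change rot (ZMod.toCircle (a + b)) x = rot (ZMod.toCircle a) (rot (ZMod.toCircle b) x)
    rw [AddChar.map_add_eq_mul, rot_mul]

lemma vadd_def (a : ZMod m) (x : S3) : a +ᵥ x = rot (ZMod.toCircle a) x := rfl

instance : ContinuousConstVAdd (ZMod m) S3 := ⟨fun _ => continuous_rot _⟩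

lemma vadd_cancel {a b : ZMod m} {x : S3} (h : a +ᵥ x = b +ᵥ x) : a = b :=
  ZMod.injective_toCircle (rot_injective h)

instance : IsCancelVAdd (ZMod m) S3 where
  left_cancel' a _ _ h := vadd_left_cancel a h
  right_cancel' _ _ _ h := vadd_cancel h

variable (m) in
/-- The projection of the sphere to the lens space. -/
noncomputable def proj (x : S3) : LensSpace m 1 := Quotient.mk (lensSetoid m 1) x

lemma isQuotientMap_proj : Topology.IsQuotientMap (proj m) :=
  isQuotientMap_quotient_mk' (s := lensSetoid m 1)

lemma proj_eq {x y : S3} : proj m x = proj m y ↔ x ∈ AddAction.orbit (ZMod m) y := by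
  have key : proj m x = proj m y ↔ (lensSetoid m 1).r y x :=
    eq_comm.trans (Quotient.eq (r := lensSetoid m 1))
  rw [key]
  constructor
  · rintro ⟨ζ, h1, h2⟩
    obtain ⟨i, hi, h⟩ := (Complex.mem_rootsOfUnity m ζ).mp ((mem_rootsOfUnity m ζ).mpr h1)
    refine ⟨(i : ZMod m), ?_⟩
    refine Subtype.ext ?_
    rw [h2]
    change ((ZMod.toCircle (i : ZMod m) : Circle) : ℂ) • y.1 = _
    rw [ZMod.toCircle_natCast, Units.smul_def, ← h]
    congr 2
    ring
  · rintro ⟨a, ha⟩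
    refine ⟨Circle.toUnits (ZMod.toCircle a), ?_, ?_⟩
    · rw [← map_pow, ← AddChar.map_nsmul_eq_pow]
      simp
    · rw [← ha]; rfl

lemma isCoveringMap_proj : IsCoveringMap (proj m) :=
  (isQuotientMap_proj.isAddQuotientCoveringMap_of_properlyDiscontinuousVAdd
    (G := ZMod m) proj_eq).isCoveringMap

lemma proj_vadd (a : ZMod m) (x : S3) : proj m (a +ᵥ x) = proj m x :=
  proj_eq.mpr ⟨a, rfl⟩

lemma vadd_one_eq (x : S3) : rot (Circle.exp (2 * Real.pi / m)) x = (1 : ZMod m) +ᵥ x := by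
  have h : ZMod.toCircle (1 : ZMod m) = Circle.exp (2 * Real.pi / m) := by
    have := ZMod.toCircle_natCast (N := m) 1
    rw [Nat.cast_one] at this
    refine Circle.ext (this.trans ?_)
    rw [Circle.coe_exp]
    push_cast
    congr 1; ring
  rw [vadd_def, h]

/-- Two lifts of the same map from a preconnected set differ by a constant deck transformation. -/
lemma lift_diff {A : Type} [TopologicalSpace A] {K : Set A} (hK : IsPreconnected K) {f g : A → S3}
    (hf : ContinuousOn f K) (hg : ContinuousOn g K) (h : ∀ x ∈ K, proj m (f x) = proj m (g x))
    {x : A} (hx : x ∈ K) {a : ZMod m} (ha : g x = a +ᵥ f x) {y : A} (hy : y ∈ K) :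
    g y = a +ᵥ f y := by
  refine isCoveringMap_proj.eqOn_of_comp_eqOn (f := proj m) hK hg
    ((continuous_const_vadd a).comp_continuousOn hf) (fun z hz => ?_) hx ha hy
  simp only [Function.comp]
  rw [proj_vadd, h z hz]

/-- The time at which the `i`-th coordinate of `pik k` is evaluated. -/
noncomputable def tpt (k : ℕ) (i : Fin k) : I :=
  Set.projIcc 0 1 zero_le_one ((i : ℝ) / ((k : ℝ) - 1))

lemma tpt_zero (k : ℕ) (i : Fin k) (hi : (i : ℕ) = 0) : tpt k i = 0 := by
  simp [tpt, hi, Set.projIcc_left]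

variable (m) in
/-- The projection from lattice coordinates to the power of the lens space. The order of the
factors is reversed so that the starting point of a path is the last lattice factor. -/
noncomputable def projR {k : ℕ} (x : Fin k → S3) : Fin k → LensSpace m 1 :=
  fun l => proj m (x l.rev)

lemma continuous_projR {k : ℕ} : Continuous (projR m (k := k)) :=
  continuous_pi fun _ => isQuotientMap_proj.continuous.comp (continuous_apply _)

lemma projR_update {k : ℕ} (x : Fin k → S3) (j : Fin k) (a : ZMod m) :
    projR m (Function.update x j (a +ᵥ x j)) = projR m x := by
  funext l
  unfold projR
  rcases eq_or_ne l.rev j with h | h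
  · rw [h, Function.update_self, proj_vadd]
  · rw [Function.update_of_ne h]

/-- A section over `U` lifts to a family of paths in the sphere. The position of the lifted paths
relative to the given points yields locally constant labels on the preimage of `U`. -/
lemma exists_label (κ : ℕ) {U : Set (Fin (κ + 2) → LensSpace m 1)} (hs : HasSec (κ + 2) U) :
    ∃ L : (Fin (κ + 2) → S3) → (Fin (κ + 1) → ZMod m),
      (∀ K, IsPreconnected K → K ⊆ projR m ⁻¹' U → ∀ x ∈ K, ∀ y ∈ K, L x = L y) ∧
      ∀ x ∈ projR m ⁻¹' U, ∀ j, L (Function.update x j ((1 : ZMod m) +ᵥ x j)) =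
        L x + gvec m (κ + 1) j := by
  classical
  obtain ⟨s, hs⟩ := hs
  let V := projR m (k := κ + 2) ⁻¹' U
  let u : C(V, U) := ⟨fun x => ⟨projR m x.1, x.2⟩,
    Continuous.subtype_mk (continuous_projR.comp continuous_subtype_val) _⟩
  let H : C(I × V, LensSpace m 1) := ⟨fun p => s (u p.2) p.1, by fun_prop⟩
  let f : C(V, S3) := ⟨fun x => x.1 (Fin.last _), (continuous_apply _).comp continuous_subtype_val⟩
  have hpt : ∀ (x : V) (j : Fin (κ + 2)), s (u x) (tpt _ j.rev) = proj m (x.1 j) := fun x j => by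
    have := congrFun (hs (u x)) j.rev
    refine this.trans ?_
    change proj m (x.1 j.rev.rev) = _
    rw [Fin.rev_rev]
  have hlast : tpt (κ + 2) (Fin.last (κ + 1)).rev = 0 := tpt_zero _ _ (by simp)
  have H0 : ∀ x, H (0, x) = proj m (f x) := fun x => by
    have := hpt x (Fin.last _)
    rw [hlast] at this
    exact this
  let E := isCoveringMap_proj.liftHomotopy H f H0
  have hE : ∀ t x, proj m (E (t, x)) = s (u x) t := fun t x =>
    congrFun (isCoveringMap_proj.liftHomotopy_lifts H f H0) (t, x)
  have hE0 : ∀ x, E (0, x) = x.1 (Fin.last _) := isCoveringMap_proj.liftHomotopy_zero H f H0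
  have hEj : ∀ (x : V) (j : Fin (κ + 2)), proj m (x.1 j) = proj m (E (tpt _ j.rev, x)) :=
    fun x j => by rw [hE, hpt]
  have hex : ∀ (x : V) (j : Fin (κ + 2)), ∃ a : ZMod m, E (tpt _ j.rev, x) = a +ᵥ x.1 j :=
    fun x j => by
      obtain ⟨a, ha⟩ := proj_eq.mp (hEj x j).symm
      exact ⟨a, ha.symm⟩
  choose z hz using hex
  have hzu : ∀ (x : V) (j) (a : ZMod m), E (tpt _ j.rev, x) = a +ᵥ x.1 j → z x j = a :=
    fun x j a h => vadd_cancel ((hz x j).symm.trans h)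
  -- Two points with the same image have lifted paths that differ by a deck transformation.
  have hmove : ∀ (x y : V) (a : ZMod m), u x = u y → y.1 (Fin.last _) = a +ᵥ x.1 (Fin.last _) →
      ∀ t, E (t, y) = a +ᵥ E (t, x) := fun x y a hu h t => by
    refine lift_diff (K := Set.univ) isPreconnected_univ (f := fun t => E (t, x))
      (g := fun t => E (t, y)) (by fun_prop) (by fun_prop) (fun t _ => by rw [hE, hE, hu])
      (Set.mem_univ 0) (by rw [hE0, hE0, h]) (Set.mem_univ t)
  refine ⟨fun x => if h : x ∈ V then fun i => - z ⟨x, h⟩ i.castSucc else 0, ?_, ?_⟩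
  · intro K hK hKV x hx y hy
    have hxV : x ∈ V := hKV hx
    have hyV : y ∈ V := hKV hy
    simp only [dif_pos hxV, dif_pos hyV]
    funext i
    congr 1
    symm
    refine hzu _ _ _ ?_
    have hK' : IsPreconnected ((↑) ⁻¹' K : Set V) := by
      rw [← Topology.IsInducing.subtypeVal.isPreconnected_image, Subtype.image_preimage_coe,
        Set.inter_eq_right.mpr hKV]
      exact hK
    exact lift_diff hK' (f := fun w : V => w.1 i.castSucc)
      (g := fun w : V => E (tpt _ i.castSucc.rev, w))
      ((continuous_apply _).comp continuous_subtype_val).continuousOn (by fun_prop)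
      (fun w _ => hEj w _) (x := ⟨x, hxV⟩) hx (hz _ _) (y := ⟨y, hyV⟩) hy
  · intro x hx j
    have hxV : x ∈ V := hx
    have hyV : Function.update x j ((1 : ZMod m) +ᵥ x j) ∈ V := by
      change projR m _ ∈ U
      rw [projR_update]
      exact hx
    have hu : u ⟨x, hxV⟩ = u ⟨_, hyV⟩ := Subtype.ext (projR_update x j 1).symm
    simp only [dif_pos hxV, dif_pos hyV]
    funext i
    rw [Pi.add_apply, gvec]
    rcases eq_or_ne j (Fin.last _) with rfl | hj
    · rw [if_pos rfl, ← neg_add, neg_inj]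
      refine hzu _ _ _ ?_
      rw [hmove _ _ 1 hu (by simp), hz, vadd_vadd, add_comm]
      simp
    · rw [if_neg hj]
      have hm0 : ∀ t, E (t, ⟨_, hyV⟩) = E (t, ⟨x, hxV⟩) := fun t => by
        rw [hmove _ _ 0 hu (by simp [Function.update_of_ne hj.symm]), zero_vadd]
      split_ifs with h
      · rw [← sub_eq_neg_add, ← neg_sub, neg_inj]
        refine hzu _ _ _ ?_
        subst h
        simp only [hm0, hz, Function.update_self, vadd_vadd, sub_add_cancel]
      · rw [add_zero, neg_inj]
        refine hzu _ _ _ ?_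
        rw [hm0, hz]
        simp [Function.update_of_ne (Ne.symm h)]

/-- A cover of the `(κ + 2)`-nd power of the lens space with sections has at least `3 (κ + 2)` members. -/
theorem lower_bound (κ m r : ℕ) (hm : 3 ≤ m) (h : TCCoverAt (LensSpace m 1) (κ + 2) r) :
    3 * (κ + 2) ≤ r := by
  have : NeZero m := ⟨by omega⟩
  obtain ⟨U, hU, hc, hs⟩ := h
  choose L hL hT using fun i => exists_label κ (hs i)
  let V : ℕ → Set (Fin (κ + 2) → S3) := fun i =>
    if h : i < r then projR m ⁻¹' U ⟨i, h⟩ else ∅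
  have hV : ∀ i (h : i < r), V i = projR m ⁻¹' U ⟨i, h⟩ := fun i h => dif_pos h
  have hV' : ∀ i, ¬ i < r → V i = ∅ := fun i h => dif_neg h
  refine cover_bound κ m r hm V (fun i => ?_) (fun x => ?_) (fun i x j => ?_)
    (fun i => if h : i < r then L ⟨i, h⟩ else 0) (fun i => ?_) (fun i => ?_)
  · by_cases h : i < r
    · rw [hV i h]; exact (hU _).preimage continuous_projR
    · rw [hV' i h]; exact isOpen_empty
  · have : projR m x ∈ ⋃ i, U i := by rw [hc]; trivial
    obtain ⟨i, hi⟩ := Set.mem_iUnion.mp this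
    exact ⟨i, i.2, by rw [hV i i.2]; exact hi⟩
  · by_cases h : i < r
    · rw [hV i h, Set.mem_preimage, vadd_one_eq, projR_update]; rfl
    · rw [hV' i h]; rfl
  · by_cases h : i < r
    · rw [hV i h]
      simp only [dif_pos h]
      exact hL ⟨i, h⟩
    · rw [hV' i h]
      intro K _ hK x hx
      exact absurd (hK hx) (Set.notMem_empty x)
  · by_cases h : i < r
    · rw [hV i h]
      intro x hx j
      simp only [dif_pos h]
      rw [vadd_one_eq]
      exact hT ⟨i, h⟩ x hx j
    · rw [hV' i h]
      intro x hx
      exact absurd hx (Set.notMem_empty x)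

end

/-! ### Sections from homotopies -/

/-- Homotopies from the coordinate maps to one common map `g` can be run out and back between
consecutive evaluation times; the resulting paths form a section of `pik`. -/
lemma hasSec_of_homotopies {X : Type*} [TopologicalSpace X] {k : ℕ} (hk : 2 ≤ k)
    {S : Set (Fin k → X)} (h : Fin k → C(I × S, X)) (g : S → X)
    (h0 : ∀ j u, h j (0, u) = u.1 j) (h1 : ∀ j u, h j (1, u) = g u) : HasSec k S := by
  have hk1 : (0 : ℝ) < (k : ℝ) - 1 := by
    have : (2 : ℝ) ≤ k := by exact_mod_cast hk
    linarith
  let d : Fin k → I × S → ℝ := fun j p => |((k : ℝ) - 1) * p.1.1 - j|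
  have hd : ∀ j, Continuous (d j) := fun j => by fun_prop
  let F : Fin k → I × S → X := fun j p => h j (Set.projIcc 0 1 zero_le_one (2 * d j p), p.2)
  have hF : ∀ j, Continuous (F j) := fun j =>
    (h j).continuous.comp ((continuous_projIcc.comp (continuous_const.mul (hd j))).prodMk
      continuous_snd)
  let A : Fin k → Set (I × S) := fun j => {p | d j p ≤ 1 / 2}
  have hA : ∀ j, IsClosed (A j) := fun j => isClosed_le (hd j) continuous_const
  have hcov : ∀ p, ∃ j, p ∈ A j := fun p => by
    have p0 := p.1.2.1
    have p1 := p.1.2.2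
    set s : ℝ := ((k : ℝ) - 1) * p.1.1 with hs
    have s0 : 0 ≤ s := by positivity
    have s1 : s ≤ (k : ℝ) - 1 := by nlinarith
    have f1 := Nat.floor_le (a := s + 1 / 2) (by positivity)
    have f2 := Nat.lt_floor_add_one (s + 1 / 2)
    have hj : ⌊s + 1 / 2⌋₊ < k := by
      have : (⌊s + 1 / 2⌋₊ : ℝ) < k := by linarith
      exact_mod_cast this
    refine ⟨⟨_, hj⟩, ?_⟩
    change |s - (⌊s + 1 / 2⌋₊ : ℝ)| ≤ 1 / 2
    rw [abs_le]
    constructor <;> linarith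
  have hcons : ∀ p i j, p ∈ A i → p ∈ A j → F i p = F j p := by
    intro p i j hi hj
    rcases eq_or_ne i j with rfl | hij
    · rfl
    have hij' : (1 : ℝ) ≤ |(i : ℝ) - j| := by
      have : (1 : ℤ) ≤ |((i : ℕ) : ℤ) - (j : ℕ)| := by
        refine Int.one_le_abs (sub_ne_zero.mpr fun h => hij (Fin.ext (by exact_mod_cast h)))
      exact_mod_cast this
    -- Distinct pieces meet only at midpoints, where both homotopies have reached `g`.
    have key : ∀ l, 1 / 2 ≤ d l p → F l p = g p.2 := fun l hl => by
      change h l (_, _) = _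
      rw [Set.projIcc_of_right_le _ (by linarith)]
      exact h1 l p.2
    have tri : |(i : ℝ) - j| ≤ d i p + d j p := by
      have := abs_sub_le (i : ℝ) (((k : ℝ) - 1) * p.1.1) j
      rwa [abs_sub_comm (i : ℝ) (((k : ℝ) - 1) * p.1.1)] at this
    have hi' : d i p ≤ 1 / 2 := hi
    have hj' : d j p ≤ 1 / 2 := hj
    rw [key i (by linarith), key j (by linarith)]
  choose J hJ using hcov
  have hG : Continuous fun p => F (J p) p := by
    refine (locallyFinite_of_finite A).continuous
      (Set.iUnion_eq_univ_iff.mpr fun p => ⟨J p, hJ p⟩) hA fun j => ?_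
    exact (hF j).continuousOn.congr fun p hp => hcons p _ _ (hJ p) hp
  let G : C(S × I, X) := ⟨fun p => F (J p.swap) p.swap, hG.comp continuous_swap⟩
  refine ⟨G.curry, fun u => funext fun i => ?_⟩
  have ht : d i (tpt k i, u) = 0 := by
    have hi : (i : ℝ) ≤ (k : ℝ) - 1 := by
      have : (i : ℕ) + 1 ≤ k := i.2
      have : ((i : ℕ) : ℝ) + 1 ≤ k := by exact_mod_cast this
      linarith
    have : (tpt k i : ℝ) = (i : ℝ) / ((k : ℝ) - 1) := by
      rw [tpt, Set.projIcc_of_mem _ ⟨by positivity, (div_le_one hk1).mpr hi⟩]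
    simp only [d, this, mul_div_cancel₀ _ hk1.ne', sub_self, abs_zero]
  change F (J (tpt k i, u)) (tpt k i, u) = _
  rw [hcons _ _ i (hJ _) (by simp [A, ht])]
  simp only [F, ht, mul_zero, Set.projIcc_left]
  exact h0 i u

/-- Sections over pairwise disjoint open sets combine to a section over their union. -/
lemma hasSec_iUnion {X : Type*} [TopologicalSpace X] {k : ℕ} {ι : Type*}
    {S : ι → Set (Fin k → X)} (ho : ∀ i, IsOpen (S i))
    (hd : ∀ i j u, u ∈ S i → u ∈ S j → i = j) (hs : ∀ i, HasSec k (S i)) :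
    HasSec k (⋃ i, S i) := by
  choose s hs using hs
  let T : ι → Set (⋃ i, S i : Set (Fin k → X)) := fun i => {u | u.1 ∈ S i}
  let φ : ∀ i, C(T i, C(I, X)) := fun i =>
    (s i).comp ⟨fun u => ⟨u.1.1, u.2⟩, by fun_prop⟩
  have hφ : ∀ (i j) (x) (hxi : x ∈ T i) (hxj : x ∈ T j), φ i ⟨x, hxi⟩ = φ j ⟨x, hxj⟩ := by
    intro i j x hxi hxj
    obtain rfl := hd i j x.1 hxi hxj
    rfl
  have hT : ∀ x, ∃ i, T i ∈ nhds x := fun x => by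
    obtain ⟨i, hi⟩ := Set.mem_iUnion.mp x.2
    exact ⟨i, ((ho i).preimage continuous_subtype_val).mem_nhds hi⟩
  refine ⟨ContinuousMap.liftCover T φ hφ hT, fun u => ?_⟩
  obtain ⟨i, hi⟩ := Set.mem_iUnion.mp u.2
  have : ContinuousMap.liftCover T φ hφ hT u = φ i ⟨u, hi⟩ :=
    ContinuousMap.liftCover_coe (S := T) (φ := φ) (hφ := hφ) (hS := hT) ⟨u, hi⟩
  rw [this]
  exact hs i _

section
variable {m : ℕ} [NeZero m]

variable (m) in
/-- The projection from the power of the sphere to the power of the lens space. -/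
noncomputable def projk {k : ℕ} (x : Fin k → S3) : Fin k → LensSpace m 1 := fun j => proj m (x j)

lemma isOpenQuotientMap_projk {k : ℕ} : IsOpenQuotientMap (projk m (k := k)) :=
  IsOpenQuotientMap.piMap fun _ =>
    (isQuotientMap_proj.isAddQuotientCoveringMap_of_properlyDiscontinuousVAdd
      (G := ZMod m) proj_eq).isOpenQuotientMap

/-- Homotopies on an open set of the power of the sphere that are constant on the fibers of the
projection descend to the image of that set. -/
lemma hasSec_image {k : ℕ} (hk : 2 ≤ k) {W : Set (Fin k → S3)} (hW : IsOpen W)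
    (H : Fin k → C(I × W, LensSpace m 1))
    (hc : ∀ j t (w w' : W), projk m w.1 = projk m w'.1 → H j (t, w) = H j (t, w'))
    (h0 : ∀ j w, H j (0, w) = proj m (w.1 j)) (g : W → LensSpace m 1)
    (h1 : ∀ j w, H j (1, w) = g w) : HasSec k (projk m '' W) := by
  let Q : W → (projk m '' W : Set _) := fun w => ⟨projk m w.1, w.1, w.2, rfl⟩
  have hQ : IsOpenQuotientMap Q := by
    refine ⟨?_, ?_, ?_⟩
    · rintro ⟨_, w, hw, rfl⟩
      exact ⟨⟨w, hw⟩, rfl⟩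
    · exact Continuous.subtype_mk (isOpenQuotientMap_projk.continuous.comp
        continuous_subtype_val) _
    · intro O hO
      refine ⟨projk m '' (Subtype.val '' O), isOpenQuotientMap_projk.isOpenMap _
        (hW.isOpenMap_subtype_val _ hO), ?_⟩
      ext u
      constructor
      · rintro ⟨_, ⟨w, hw, rfl⟩, h⟩
        exact ⟨w, hw, Subtype.ext h⟩
      · rintro ⟨w, hw, rfl⟩
        exact ⟨w.1, ⟨w, hw, rfl⟩, rfl⟩
  have hQ' : Topology.IsQuotientMap (Prod.map (id : I → I) Q) :=
    (IsOpenQuotientMap.id.prodMap hQ).isQuotientMap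
  have hlift : ∀ j, ∃ h : C(I × (projk m '' W : Set _), LensSpace m 1),
      ∀ t w, h (t, Q w) = H j (t, w) := fun j => by
    let q : C(I × W, I × (projk m '' W : Set _)) := ⟨_, hQ'.continuous⟩
    have hf : Function.FactorsThrough (H j) q := by
      rintro ⟨t, w⟩ ⟨t', w'⟩ h
      obtain ⟨h1, h2⟩ := Prod.ext_iff.mp h
      change t = t' at h1
      subst h1
      exact hc j t w w' (congrArg Subtype.val h2)
    refine ⟨hQ'.lift (f := q) (H j) hf, fun t w => ?_⟩
    exact congrFun (congrArg DFunLike.coe (hQ'.lift_comp (f := q) (H j) hf)) (t, w)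
  choose h hh using hlift
  have hg : ∀ j u, h j (1, u) = h ⟨0, by omega⟩ (1, u) := fun j u => by
    obtain ⟨w, rfl⟩ := hQ.surjective u
    rw [hh, hh, h1, h1]
  refine hasSec_of_homotopies hk h _ (fun j u => ?_) hg
  obtain ⟨w, rfl⟩ := hQ.surjective u
  rw [hh, h0]
  rfl

end

/-! ### Deformations onto the core circles -/

section
variable {m : ℕ} [NeZero m]

/-- The unit vector in the direction of `y`, for `y ≠ 0`. -/
noncomputable def unit (y : {y : EuclideanSpace ℂ (Fin 2) // y ≠ 0}) : S3 :=
  ⟨(‖y.1‖⁻¹ : ℝ) • y.1, by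
    rw [mem_sphere_zero_iff_norm, norm_smul, norm_inv, norm_norm,
      inv_mul_cancel₀ (norm_ne_zero_iff.mpr y.2)]⟩

lemma continuous_unit : Continuous unit := by
  refine Continuous.subtype_mk ?_ _
  refine Continuous.smul (Continuous.inv₀ (by fun_prop) fun y => norm_ne_zero_iff.mpr y.2)
    continuous_subtype_val

lemma proj_eq_of_smul {x y : S3} {ζ : ℂ} (hζ : ζ ^ m = 1) (h : y.1 = ζ • x.1) :
    proj m x = proj m y := by
  have h0 : ζ ≠ 0 := fun h => by
    rw [h, zero_pow (NeZero.ne m)] at hζ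
    exact zero_ne_one hζ
  refine Quotient.sound (s := lensSetoid m 1) ⟨Units.mk0 ζ h0, Units.ext (by simpa using hζ), ?_⟩
  exact h

lemma exists_smul_of_proj_eq {x y : S3} (h : proj m x = proj m y) :
    ∃ ζ : ℂ, ζ ^ m = 1 ∧ y.1 = ζ • x.1 := by
  obtain ⟨ζ, h1, h2⟩ := Quotient.exact (s := lensSetoid m 1) h
  exact ⟨ζ, by rw [← Units.val_pow_eq_pow_val, h1, Units.val_one], h2⟩

lemma proj_unit_smul {x y : {y : EuclideanSpace ℂ (Fin 2) // y ≠ 0}} {ζ : ℂ} (hζ : ζ ^ m = 1)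
    (h : y.1 = ζ • x.1) : proj m (unit x) = proj m (unit y) := by
  refine proj_eq_of_smul hζ ?_
  have : ‖ζ‖ = 1 := Complex.norm_eq_one_of_pow_eq_one hζ (NeZero.ne m)
  change (‖y.1‖⁻¹ : ℝ) • y.1 = ζ • (‖x.1‖⁻¹ : ℝ) • x.1
  rw [h, norm_smul, this, one_mul, smul_comm]

lemma unit_coe (x : S3) (h : x.1 ≠ 0) : unit ⟨x.1, h⟩ = x := by
  refine Subtype.ext ?_
  have := mem_sphere_zero_iff_norm.mp x.2
  change (‖x.1‖⁻¹ : ℝ) • x.1 = x.1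
  rw [this, inv_one, one_smul]

variable (m) in
/-- Maps on a set of tuples that depend only on the image of the tuple under the projection. -/
def Desc {k : ℕ} (W : Set (Fin k → S3)) (f : C(W, LensSpace m 1)) : Prop :=
  ∀ w v : W, projk m w.1 = projk m v.1 → f w = f v

/-- A nowhere vanishing equivariant family of vectors gives a homotopy of descending maps. -/
lemma stage {k : ℕ} {W : Set (Fin k → S3)} (f : C(I × W, EuclideanSpace ℂ (Fin 2)))
    (hf : ∀ p, f p ≠ 0)
    (hc : ∀ (w w' : W), projk m w.1 = projk m w'.1 → ∃ ζ : ℂ, ζ ^ m = 1 ∧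
      ∀ t, f (t, w') = ζ • f (t, w))
    (f₀ f₁ : C(W, LensSpace m 1)) (h0 : ∀ w, f₀ w = proj m (unit ⟨f (0, w), hf _⟩))
    (h1 : ∀ w, f₁ w = proj m (unit ⟨f (1, w), hf _⟩)) :
    ContinuousMap.HomotopicWith f₀ f₁ (Desc m W) := by
  refine ⟨{ toFun := fun p => proj m (unit ⟨f p, hf p⟩)
            continuous_toFun := isQuotientMap_proj.continuous.comp
              (continuous_unit.comp (f.continuous.subtype_mk hf))
            map_zero_left := fun w => (h0 w).symm
            map_one_left := fun w => (h1 w).symm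
            prop' := ?_ }⟩
  intro t w w' h
  obtain ⟨ζ, h1, h2⟩ := hc w w' h
  exact proj_unit_smul h1 (h2 t)

/-- The open set on which the deformation with parameters `c`, `ρ` is defined, for the choice `τ`
of which of the two core circles each coordinate is pushed to. The sign in the last condition is part
of the choice of the constant `c`. -/
def Wset (m : ℕ) {κ : ℕ} (c : ℂ) (ρ : ℝ) (τ : Fin (κ + 2) → Fin 2) : Set (Fin (κ + 2) → S3) :=
  {x | ∀ j, ((τ j = 0 ∧ ρ < ‖(x j).1 0‖ ^ 2) ∨ (τ j = 1 ∧ ‖(x j).1 0‖ ^ 2 < ρ)) ∧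
    -((x j).1 (τ j) / (x 0).1 (τ 0)) ^ m / c ∈ Complex.slitPlane}

variable {κ : ℕ} {c : ℂ} {ρ : ℝ} {τ : Fin (κ + 2) → Fin 2}

lemma core_ne (hρ0 : 0 < ρ) (hρ1 : ρ < 1) {x : S3} {s : Fin 2}
    (h : (s = 0 ∧ ρ < ‖x.1 0‖ ^ 2) ∨ (s = 1 ∧ ‖x.1 0‖ ^ 2 < ρ)) : x.1 s ≠ 0 := by
  intro hx
  have := (mem_S3 x.1).mp x.2
  rcases h with ⟨rfl, h⟩ | ⟨rfl, h⟩
  · rw [hx] at h; simp at h; linarith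
  · rw [hx, norm_zero, zero_pow two_ne_zero, add_zero] at this; linarith

lemma continuous_coord (j : Fin (κ + 2)) (s : Fin 2) :
    Continuous fun x : Fin (κ + 2) → S3 => (x j).1 s :=
  (PiLp.continuous_apply 2 _ s).comp (continuous_subtype_val.comp (continuous_apply j))

lemma isOpen_Wset (hρ0 : 0 < ρ) (hρ1 : ρ < 1) : IsOpen (Wset m c ρ τ) := by
  -- The base factor has to be treated first, so that the quotient is continuous.
  let B : Set (Fin (κ + 2) → S3) :=
    {x | ∀ j, (τ j = 0 ∧ ρ < ‖(x j).1 0‖ ^ 2) ∨ (τ j = 1 ∧ ‖(x j).1 0‖ ^ 2 < ρ)}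
  have hB : IsOpen B := by
    have : B = ⋂ j, {x | (τ j = 0 ∧ ρ < ‖(x j).1 0‖ ^ 2) ∨ (τ j = 1 ∧ ‖(x j).1 0‖ ^ 2 < ρ)} := by
      ext x; simp [B]
    rw [this]
    refine isOpen_iInter_of_finite fun j => ?_
    have hcj := ((continuous_coord j 0).norm.pow 2 : Continuous _)
    exact (isOpen_const.inter (isOpen_lt continuous_const hcj)).union
      (isOpen_const.inter (isOpen_lt hcj continuous_const))
  have : Wset m c ρ τ = ⋂ j, B ∩ (fun x : Fin (κ + 2) → S3 =>
      -((x j).1 (τ j) / (x 0).1 (τ 0)) ^ m / c) ⁻¹' Complex.slitPlane := by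
    ext x
    simp only [Wset, B, Set.mem_ofPred_eq, Set.mem_iInter, Set.mem_inter_iff, Set.mem_preimage]
    exact ⟨fun h j => ⟨fun i => (h i).1, (h j).2⟩, fun h j => ⟨(h j).1 j, (h j).2⟩⟩
  rw [this]
  refine isOpen_iInter_of_finite fun j => ?_
  refine ContinuousOn.isOpen_inter_preimage ?_ hB Complex.isOpen_slitPlane
  refine ContinuousOn.div_const (ContinuousOn.neg (ContinuousOn.pow ?_ _)) _
  exact (continuous_coord j _).continuousOn.div (continuous_coord 0 _).continuousOn
    fun x hx => core_ne hρ0 hρ1 (hx 0)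

/-- The vector supported on one coordinate axis. -/
noncomputable def ax2 (s : Fin 2) (a : ℂ) : EuclideanSpace ℂ (Fin 2) := EuclideanSpace.single s a

lemma ax2_ne {s : Fin 2} {a : ℂ} (h : a ≠ 0) : ax2 s a ≠ 0 := by
  simpa [ax2] using h

lemma smul_ax2 (s : Fin 2) (a b : ℂ) : ax2 s (a * b) = a • ax2 s b := by
  ext i; simp [ax2]

lemma ax2_eq (s : Fin 2) (a : ℂ) : ax2 s a = a • ax2 s 1 := by
  rw [← smul_ax2, mul_one]

/-- The deformation of the coordinate `j`, through maps that descend to the lens space, to a map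
that depends on the first coordinate only: push to the core circle, turn so that the `m`-th powers
of the coordinate and of the first coordinate differ by `-c`, and follow a fixed path. -/
lemma stages (hρ0 : 0 < ρ) (hρ1 : ρ < 1) (hc0 : c ≠ 0) (j : Fin (κ + 2))
    (f g : C(Wset m c ρ τ, LensSpace m 1)) (hf : ∀ w, f w = proj m (w.1 j))
    (hne : ∀ w : Wset m c ρ τ, ax2 0 ((w.1 0).1 (τ 0)) ≠ 0)
    (hg : ∀ w, g w = proj m (unit ⟨ax2 0 ((w.1 0).1 (τ 0)), hne w⟩)) :
    ContinuousMap.HomotopicWith f g (Desc m _) := by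
  let W := Wset m c ρ τ
  have hm0 : m ≠ 0 := NeZero.ne m
  have hmC : (m : ℂ) ≠ 0 := Nat.cast_ne_zero.mpr hm0
  let a : Fin (κ + 2) → W → ℂ := fun i w => (w.1 i).1 (τ i)
  have ha : ∀ i w, a i w ≠ 0 := fun i w => core_ne hρ0 hρ1 (w.2 i).1
  have hac : ∀ i, Continuous (a i) := fun i =>
    (continuous_coord i _).comp continuous_subtype_val
  let z : W → ℂ := fun w => -(a j w / a 0 w) ^ m / c
  have hz : ∀ w, z w ∈ Complex.slitPlane := fun w => (w.2 j).2
  have hzc : Continuous z := (((hac j).div (hac 0) (ha 0)).pow m).neg.div_const c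
  have hζ : ∀ (i) (w w' : W), projk m w.1 = projk m w'.1 → ∃ ζ : ℂ, ζ ^ m = 1 ∧
      (w'.1 i).1 = ζ • (w.1 i).1 := fun i w w' h => exists_smul_of_proj_eq (congrFun h i)
  have haζ : ∀ (i) (w w' : W) (ζ : ℂ), (w'.1 i).1 = ζ • (w.1 i).1 → a i w' = ζ * a i w :=
    fun i w w' ζ h => by
      change (w'.1 i).1 (τ i) = _
      rw [h]; rfl
  have hzζ : ∀ w w' : W, projk m w.1 = projk m w'.1 → z w' = z w := fun w w' h => by
    obtain ⟨ζ, h1, h2⟩ := hζ j w w' h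
    obtain ⟨ζ', h1', h2'⟩ := hζ 0 w w' h
    simp only [z, haζ _ _ _ _ h2, haζ _ _ _ _ h2', div_pow, mul_pow, h1, h1', one_mul]
  obtain ⟨d, hd⟩ := IsAlgClosed.exists_pow_nat_eq (-c) (Nat.pos_of_ne_zero hm0)
  have hd0 : d ≠ 0 := fun h => by
    rw [h, zero_pow hm0] at hd
    exact hc0 (neg_eq_zero.mp hd.symm)
  -- First deformation: push the point to its core circle.
  let f₁ : C(I × W, EuclideanSpace ℂ (Fin 2)) :=
    ⟨fun p => WithLp.toLp 2 fun i => if i = τ j then (p.2.1 j).1 i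
      else ((1 - (p.1 : ℝ) : ℝ) : ℂ) * (p.2.1 j).1 i, by
      refine (PiLp.continuous_toLp 2 _).comp (continuous_pi fun i => ?_)
      have := (continuous_coord j i).comp (continuous_subtype_val.comp continuous_snd :
        Continuous fun p : I × W => p.2.1)
      simp only [Function.comp_def] at this
      split_ifs
      · exact this
      · exact (Complex.continuous_ofReal.comp (by fun_prop)).mul this⟩
  have hf₁ : ∀ p, f₁ p ≠ 0 := fun p h => ha j p.2 (by
    have := congrArg (fun y : EuclideanSpace ℂ (Fin 2) => y (τ j)) h
    simpa [f₁] using this)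
  -- Second deformation: turn along the core circle to the prescribed angle.
  let e₂ : I × W → ℂ := fun p => a j p.2 * Complex.exp (-(p.1 : ℝ) * Complex.log (z p.2) / m)
  have he₂ : Continuous e₂ := by
    have hl : Continuous fun p : I × W => Complex.log (z p.2) :=
      Continuous.clog (hzc.comp continuous_snd) fun p => hz p.2
    have h1 : Continuous fun p : I × W => -((p.1 : ℝ) : ℂ) :=
      (Complex.continuous_ofReal.comp (by fun_prop)).neg
    exact ((hac j).comp continuous_snd).mul
      (Complex.continuous_exp.comp ((h1.mul hl).div_const _))
  have hax : ∀ s, Continuous (ax2 s) := fun s => by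
    have : ax2 s = fun a => a • ax2 s 1 := funext (ax2_eq s)
    rw [this]
    exact continuous_id.smul continuous_const
  let f₂ : C(I × W, EuclideanSpace ℂ (Fin 2)) := ⟨fun p => ax2 (τ j) (e₂ p), (hax _).comp he₂⟩
  have hf₂ : ∀ p, f₂ p ≠ 0 := fun p => ax2_ne (mul_ne_zero (ha _ _) (Complex.exp_ne_zero _))
  -- Third deformation: follow one fixed path, scaled by the core coordinate of the base factor.
  have hpath : JoinedIn ({0}ᶜ : Set (EuclideanSpace ℂ (Fin 2))) (ax2 (τ j) d) (ax2 0 1) := by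
    refine (isPathConnected_compl_singleton_of_one_lt_rank (E := EuclideanSpace ℂ (Fin 2)) ?_
      0).joinedIn _ (ax2_ne hd0) _ (ax2_ne one_ne_zero)
    rw [← Module.finrank_eq_rank, ← Module.finrank_mul_finrank ℝ ℂ]
    norm_num [Complex.finrank_real_complex]
  let γ := hpath.somePath
  have hγ : ∀ t, γ t ≠ 0 := hpath.somePath_mem
  let f₃ : C(I × W, EuclideanSpace ℂ (Fin 2)) := ⟨fun p => a 0 p.2 • γ p.1,
    ((hac 0).comp continuous_snd).smul (γ.continuous.comp continuous_fst)⟩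
  have hf₃ : ∀ p, f₃ p ≠ 0 := fun p => smul_ne_zero (ha _ _) (hγ _)
  let mk : (F : C(I × W, EuclideanSpace ℂ (Fin 2))) → (∀ p, F p ≠ 0) → I →
      C(W, LensSpace m 1) := fun F hF t => ⟨fun w => proj m (unit ⟨F (t, w), hF _⟩),
    isQuotientMap_proj.continuous.comp
      (continuous_unit.comp ((F.continuous.comp (by fun_prop)).subtype_mk fun w => hF _))⟩
  have s₁ : ContinuousMap.HomotopicWith f (mk f₂ hf₂ 0) (Desc m W) := by
    refine stage f₁ hf₁ (fun w w' h => ?_) _ _ (fun w => ?_) fun w => ?_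
    · obtain ⟨ζ, h1, h2⟩ := hζ j w w' h
      refine ⟨ζ, h1, fun t => ?_⟩
      ext i
      simp only [f₁, ContinuousMap.coe_mk, h2, PiLp.smul_apply, smul_eq_mul]
      split_ifs <;> ring
    · rw [hf w, ← unit_coe (w.1 j) fun h => ha j w (by simp [a, h])]
      congr 3
      ext i
      simp [f₁]
    · change proj m (unit _) = _
      congr 3
      ext i
      by_cases h : i = τ j
      · subst h; simp [f₁, f₂, e₂, ax2, a]
      · simp [f₁, f₂, e₂, ax2, h]
  have s₂ : ContinuousMap.HomotopicWith (mk f₂ hf₂ 0) (mk f₃ hf₃ 0) (Desc m W) := by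
    refine stage f₂ hf₂ (fun w w' h => ?_) _ _ (fun w => rfl) fun w => ?_
    · obtain ⟨ζ, h1, h2⟩ := hζ j w w' h
      refine ⟨ζ, h1, fun t => ?_⟩
      simp only [f₂, e₂, ContinuousMap.coe_mk, hzζ w w' h, haζ _ _ _ _ h2]
      rw [← smul_ax2, mul_assoc]
    · have hz0 := Complex.slitPlane_ne_zero (hz w)
      have hpow : (e₂ (1, w)) ^ m = (a 0 w * d) ^ m := by
        have hx : Complex.exp (-((1 : I) : ℝ) * Complex.log (z w) / m) ^ m = (z w)⁻¹ := by
          rw [← Complex.exp_nat_mul, mul_div_cancel₀ _ hmC]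
          simp [Complex.exp_neg, Complex.exp_log hz0]
        have h0 := pow_ne_zero m (ha 0 w)
        have h0j := pow_ne_zero m (ha j w)
        simp only [e₂, mul_pow, hx, hd]
        simp only [z, div_pow]
        field_simp
      have h3 : a 0 w * d ≠ 0 := mul_ne_zero (ha _ _) hd0
      refine proj_unit_smul (ζ := e₂ (1, w) / (a 0 w * d)) (m := m) ?_ ?_
      · rw [div_pow, hpow, div_self (pow_ne_zero _ h3)]
      · change ax2 (τ j) (e₂ (1, w)) = _ • (a 0 w • γ 0)
        rw [γ.source, ← smul_ax2, ← smul_ax2, div_mul_cancel₀ _ h3]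
  have s₃ : ContinuousMap.HomotopicWith (mk f₃ hf₃ 0) g (Desc m W) := by
    refine stage f₃ hf₃ (fun w w' h => ?_) _ _ (fun w => rfl) fun w => ?_
    · obtain ⟨ζ, h1, h2⟩ := hζ 0 w w' h
      refine ⟨ζ, h1, fun t => ?_⟩
      simp only [f₃, ContinuousMap.coe_mk, haζ _ _ _ _ h2, mul_smul]
    · rw [hg]
      congr 3
      change _ = a 0 w • γ 1
      rw [γ.target, ← ax2_eq]
  exact (s₁.trans s₂).trans s₃

/-- All coordinates are deformed to the same map `g`. -/
lemma hasSec_Wset (hρ0 : 0 < ρ) (hρ1 : ρ < 1) (hc0 : c ≠ 0) :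
    HasSec (κ + 2) (projk m '' Wset m c ρ τ) := by
  have hne : ∀ w : Wset m c ρ τ, ax2 0 ((w.1 0).1 (τ 0)) ≠ 0 := fun w =>
    ax2_ne (core_ne hρ0 hρ1 (w.2 0).1)
  have hax : Continuous (ax2 0) := by
    have : ax2 0 = fun a => a • ax2 0 1 := funext (ax2_eq 0)
    rw [this]
    exact continuous_id.smul continuous_const
  let g : C(Wset m c ρ τ, LensSpace m 1) :=
    ⟨fun w => proj m (unit ⟨ax2 0 ((w.1 0).1 (τ 0)), hne w⟩),
      isQuotientMap_proj.continuous.comp (continuous_unit.comp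
        ((hax.comp ((continuous_coord 0 _).comp continuous_subtype_val)).subtype_mk hne))⟩
  let f : Fin (κ + 2) → C(Wset m c ρ τ, LensSpace m 1) := fun j =>
    ⟨fun w => proj m (w.1 j), isQuotientMap_proj.continuous.comp
      ((continuous_apply j).comp continuous_subtype_val)⟩
  have hh := fun j => stages hρ0 hρ1 hc0 j (f j) g (fun w => rfl) hne (fun w => rfl)
  let H := fun j => (hh j).some
  exact hasSec_image (by omega) (isOpen_Wset hρ0 hρ1) (fun j => (H j).toContinuousMap)
    (fun j t w w' h => (H j).prop t w w' h) (fun j w => (H j).apply_zero w) g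
    fun j w => (H j).apply_one w

/-- The domains for different choices `τ` are disjoint, so one open set serves all of them. -/
lemma hasSec_iUnion_Wset (hρ0 : 0 < ρ) (hρ1 : ρ < 1) (hc0 : c ≠ 0) :
    HasSec (κ + 2) (⋃ τ : Fin (κ + 2) → Fin 2, projk m '' Wset m c ρ τ) := by
  refine hasSec_iUnion (fun τ => isOpenQuotientMap_projk.isOpenMap _ (isOpen_Wset hρ0 hρ1))
    (fun τ τ' u hu hu' => ?_) fun τ => hasSec_Wset hρ0 hρ1 hc0
  obtain ⟨w, hw, rfl⟩ := hu
  obtain ⟨w', hw', h⟩ := hu'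
  funext j
  obtain ⟨ζ, h1, h2⟩ := exists_smul_of_proj_eq (congrFun h j)
  have hn : ‖(w j).1 0‖ = ‖(w' j).1 0‖ := by
    have : ‖ζ‖ = 1 := Complex.norm_eq_one_of_pow_eq_one h1 (NeZero.ne m)
    rw [h2, PiLp.smul_apply, norm_smul, this, one_mul]
  have a1 := (hw j).1
  have a2 := (hw' j).1
  rw [hn] at a1
  rcases a1 with ⟨e, a1⟩ | ⟨e, a1⟩ <;> rcases a2 with ⟨e', a2⟩ | ⟨e', a2⟩
  · rw [e, e']
  · linarith
  · linarith
  · rw [e, e']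

end

/-! ### Generic parameters -/

/-- There are arbitrarily many real numbers that are linearly independent over the rationals
together with `1`. -/
lemma exists_indep (N : ℕ) : ∃ φ : Fin N → ℝ,
    LinearIndependent ℚ (fun i : Option (Fin N) => i.elim 1 φ) := by
  let b := Module.Basis.ofVectorSpace ℚ ℝ
  have hinf : Infinite (Module.Basis.ofVectorSpaceIndex ℚ ℝ) := by
    rw [Cardinal.infinite_iff, b.mk_eq_rank'', Real.rank_rat_real]
    exact Cardinal.aleph0_le_continuum
  obtain ⟨e⟩ : Nonempty (Option (Fin N) ↪ Module.Basis.ofVectorSpaceIndex ℚ ℝ) :=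
    ⟨(Fintype.equivFin _).toEmbedding.trans
      (Fin.valEmbedding.trans (Infinite.natEmbedding _))⟩
  have h0 : b (e none) ≠ 0 := b.ne_zero _
  have h1 := b.linearIndependent.comp e e.injective
  let M : ℝ →ₗ[ℚ] ℝ := LinearMap.mulLeft ℚ (b (e none))⁻¹
  have hM : LinearMap.ker M = ⊥ := LinearMap.ker_eq_bot.mpr
    fun x y h => mul_left_cancel₀ (inv_ne_zero h0) h
  refine ⟨fun i => (b (e none))⁻¹ * b (e (some i)), ?_⟩
  have := h1.map' M hM
  have heq : (fun i : Option (Fin N) => i.elim 1 fun i => (b (e none))⁻¹ * b (e (some i))) =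
      M ∘ b ∘ e := by
    funext i
    cases i with
    | none => simp [M, h0]
    | some i => simp [M]
  rw [heq]
  exact this

/-- If the quotient of the `m`-th powers is a positive multiple of `exp (2 π i φ)`, then `φ` is the
difference of the normalized arguments up to an integer. -/
lemma arg_rel {m : ℕ} {a b : ℂ} (ha : a ≠ 0) (hb : b ≠ 0) {φ : ℝ}
    (h : -(a / b) ^ m / Complex.exp (2 * Real.pi * φ * Complex.I) ∉ Complex.slitPlane) :
    ∃ n : ℤ, φ = m * a.arg / (2 * Real.pi) - m * b.arg / (2 * Real.pi) - n := by
  have hE := Complex.exp_ne_zero (2 * Real.pi * φ * Complex.I)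
  set w := -(a / b) ^ m / Complex.exp (2 * Real.pi * φ * Complex.I) with hw
  have hw0 : w ≠ 0 := div_ne_zero (neg_ne_zero.mpr (pow_ne_zero _ (div_ne_zero ha hb))) hE
  rw [Complex.mem_slitPlane_iff] at h
  push Not at h
  have hwr : w = ((w.re : ℝ) : ℂ) := Complex.ext rfl h.2
  have hneg : w.re < 0 := lt_of_le_of_ne h.1 fun h0 => hw0 (by rw [hwr, h0]; rfl)
  have hpi := Real.pi_pos
  -- Compare the two expressions of the unit complex number attached to `(a / b) ^ m`.
  have e1 : (a / b) ^ m = ((-w.re : ℝ) : ℂ) * Complex.exp (2 * Real.pi * φ * Complex.I) := by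
    push_cast
    rw [← hwr, hw]
    field_simp
  have hpol : ∀ x : ℂ, x ≠ 0 → x ^ m = ((‖x‖ ^ m : ℝ) : ℂ) * Complex.exp (m * x.arg * Complex.I) :=
    fun x _ => by
      conv_lhs => rw [← Complex.norm_mul_exp_arg_mul_I x]
      rw [mul_pow, ← Complex.exp_nat_mul]
      push_cast
      ring_nf
  have e2 : (a / b) ^ m = ((‖a‖ ^ m / ‖b‖ ^ m : ℝ) : ℂ) *
      Complex.exp ((m * a.arg - m * b.arg) * Complex.I) := by
    rw [div_pow, hpol a ha, hpol b hb, sub_mul, Complex.exp_sub]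
    push_cast
    rw [mul_div_mul_comm]
  have hr : (-w.re : ℝ) = ‖a‖ ^ m / ‖b‖ ^ m := by
    have n1 := congrArg norm e1
    have n2 := congrArg norm e2
    have x1 : ‖Complex.exp (2 * Real.pi * φ * Complex.I)‖ = 1 := by
      have := Complex.norm_exp_ofReal_mul_I (2 * Real.pi * φ)
      push_cast at this
      exact this
    have x2 : ‖Complex.exp ((m * a.arg - m * b.arg) * Complex.I)‖ = 1 := by
      have := Complex.norm_exp_ofReal_mul_I (m * a.arg - m * b.arg)
      push_cast at this
      exact this
    rw [norm_mul, x1, mul_one, Complex.norm_real, Real.norm_of_nonneg (by linarith)] at n1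
    rw [norm_mul, x2, mul_one, Complex.norm_real, Real.norm_of_nonneg (by positivity)] at n2
    exact n1.symm.trans n2
  have e3 : Complex.exp ((m * a.arg - m * b.arg) * Complex.I) =
      Complex.exp (2 * Real.pi * φ * Complex.I) := by
    have := e2.symm.trans e1
    rw [hr] at this
    refine mul_left_cancel₀ ?_ this
    rw [← hr]
    exact_mod_cast (by linarith : -w.re ≠ 0)
  obtain ⟨n, hn⟩ := Complex.exp_eq_exp_iff_exists_int.mp e3
  refine ⟨n, ?_⟩
  have h4 : (m * a.arg - m * b.arg : ℝ) = 2 * Real.pi * φ + n * (2 * Real.pi) := by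
    have h5 : ((m * a.arg - m * b.arg : ℝ) : ℂ) * Complex.I =
        ((2 * Real.pi * φ + n * (2 * Real.pi) : ℝ) : ℂ) * Complex.I := by
      push_cast
      rw [hn]; ring
    exact_mod_cast mul_right_cancel₀ Complex.I_ne_zero h5
  field_simp
  linarith

/-- A rational vector space spanned by the differences of `2 k` numbers and `1` has dimension at
most `2 k`. -/
lemma card_bound {ι V : Type} [Fintype V] (θ : V → ℝ) (v₀ : V) (R : Finset ι)
    (φ : ι → ℝ) (hφ : LinearIndependent ℚ (fun i : Option ι => i.elim 1 φ))
    (h : ∀ i ∈ R, ∃ v v' : V, ∃ n : ℤ, φ i = θ v - θ v' - n) : R.card + 1 ≤ Fintype.card V := by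
  classical
  let f : V → ℝ := fun v => if v = v₀ then 1 else θ v - θ v₀
  let T := Submodule.span ℚ (Set.range f)
  have h1 : (1 : ℝ) ∈ T := Submodule.subset_span ⟨v₀, if_pos rfl⟩
  have hθ : ∀ v, θ v - θ v₀ ∈ T := fun v => by
    by_cases hv : v = v₀
    · rw [hv, sub_self]; exact T.zero_mem
    · exact Submodule.subset_span ⟨v, if_neg hv⟩
  have hR : ∀ i ∈ R, φ i ∈ T := fun i hi => by
    obtain ⟨v, v', n, e⟩ := h i hi
    have : φ i = (θ v - θ v₀) - (θ v' - θ v₀) - (n : ℚ) • (1 : ℝ) := by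
      rw [e, Rat.smul_def]; push_cast; ring
    rw [this]
    exact T.sub_mem (T.sub_mem (hθ v) (hθ v')) (T.smul_mem _ h1)
  let emb : Option R → Option ι := Option.map Subtype.val
  have hemb : Function.Injective emb := Option.map_injective Subtype.val_injective
  have hli := hφ.comp emb hemb
  have hle : Set.range ((fun i : Option ι => i.elim 1 φ) ∘ emb) ⊆ T := by
    rintro _ ⟨i, rfl⟩
    cases i with
    | none => exact h1
    | some i => exact hR i.1 i.2
  have := linearIndependent_le_span' _ hli (Set.range f) hle
  have h2 : (Fintype.card (Option R) : Cardinal) ≤ (Fintype.card (Set.range f) : ℕ) := by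
    rw [← Cardinal.mk_fintype]
    exact this
  have h3 : Fintype.card (Option R) ≤ Fintype.card (Set.range f) := by exact_mod_cast h2
  rw [Fintype.card_option, Fintype.card_coe] at h3
  exact h3.trans (Fintype.card_range_le f)

/-- The deformation domains with generic parameters cover the power of the sphere. -/
lemma cover_Wset (m κ : ℕ) (φ : Fin (3 * (κ + 2)) → ℝ)
    (hφ : LinearIndependent ℚ (fun i : Option (Fin (3 * (κ + 2))) => i.elim 1 φ))
    (ρ : Fin (3 * (κ + 2)) → ℝ) (hρ : Function.Injective ρ) (h0 : ∀ i, 0 < ρ i)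
    (h1 : ∀ i, ρ i < 1) (x : Fin (κ + 2) → S3) :
    ∃ i, ∃ τ : Fin (κ + 2) → Fin 2,
      x ∈ Wset m (Complex.exp (2 * Real.pi * φ i * Complex.I)) (ρ i) τ := by
  classical
  by_contra! hbad
  let R : Finset (Fin (3 * (κ + 2))) := Finset.univ.filter fun i => ∃ j, ‖(x j).1 0‖ ^ 2 = ρ i
  have hR : R.card ≤ κ + 2 := by
    have : R.image ρ ⊆ Finset.univ.image fun j => ‖(x j).1 0‖ ^ 2 := by
      intro r hr
      obtain ⟨i, hi, rfl⟩ := Finset.mem_image.mp hr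
      obtain ⟨j, hj⟩ := (Finset.mem_filter.mp hi).2
      exact Finset.mem_image.mpr ⟨j, Finset.mem_univ _, hj⟩
    have h2 := (Finset.card_le_card this).trans Finset.card_image_le
    rwa [Finset.card_image_of_injective _ hρ, Finset.card_univ, Fintype.card_fin] at h2
  have hRc : 2 * (κ + 2) ≤ Rᶜ.card := by
    rw [Finset.card_compl, Fintype.card_fin]; omega
  have := card_bound (V := Fin (κ + 2) × Fin 2)
    (fun v => m * Complex.arg ((x v.1).1 v.2) / (2 * Real.pi)) (0, 0) Rᶜ φ hφ fun i hi => by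
      have hne : ∀ j, ‖(x j).1 0‖ ^ 2 ≠ ρ i := fun j hj =>
        Finset.mem_compl.mp hi (Finset.mem_filter.mpr ⟨Finset.mem_univ _, j, hj⟩)
      let τ : Fin (κ + 2) → Fin 2 := fun j => if ρ i < ‖(x j).1 0‖ ^ 2 then 0 else 1
      have hτ : ∀ j, (τ j = 0 ∧ ρ i < ‖(x j).1 0‖ ^ 2) ∨ (τ j = 1 ∧ ‖(x j).1 0‖ ^ 2 < ρ i) := by
        intro j
        rcases lt_or_gt_of_ne (hne j) with h | h
        · exact Or.inr ⟨if_neg h.not_gt, h⟩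
        · exact Or.inl ⟨if_pos h, h⟩
      have hb := hbad i τ
      have : ∃ j, -((x j).1 (τ j) / (x 0).1 (τ 0)) ^ m /
          Complex.exp (2 * Real.pi * φ i * Complex.I) ∉ Complex.slitPlane := by
        by_contra! hall
        exact hb fun j => ⟨hτ j, hall j⟩
      obtain ⟨j, hj⟩ := this
      obtain ⟨n, hn⟩ := arg_rel (core_ne (h0 i) (h1 i) (hτ j)) (core_ne (h0 i) (h1 i) (hτ 0)) hj
      exact ⟨(j, τ j), (0, τ 0), n, hn⟩
  rw [Fintype.card_prod, Fintype.card_fin, Fintype.card_fin] at this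
  omega

/-- Generic parameters give `3 (κ + 2)` deformation domains whose images cover. -/
theorem upper_bound (κ m : ℕ) [NeZero m] :
    TCCoverAt (LensSpace m 1) (κ + 2) (3 * (κ + 2)) := by
  obtain ⟨φ, hφ⟩ := exists_indep (3 * (κ + 2))
  let ρ : Fin (3 * (κ + 2)) → ℝ := fun i => ((i : ℕ) + 1 : ℝ) / ((3 * (κ + 2) : ℕ) + 1)
  have hden : (0 : ℝ) < ((3 * (κ + 2) : ℕ) : ℝ) + 1 := by positivity
  have h0 : ∀ i, 0 < ρ i := fun i => by positivity
  have h1 : ∀ i, ρ i < 1 := fun i => by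
    have : ((i : ℕ) : ℝ) < (3 * (κ + 2) : ℕ) := by exact_mod_cast i.2
    rw [div_lt_one hden]
    linarith
  have hρ : Function.Injective ρ := fun i j h => by
    have := (div_left_inj' hden.ne').mp h
    exact Fin.ext (by exact_mod_cast add_right_cancel this)
  refine ⟨fun i => ⋃ τ : Fin (κ + 2) → Fin 2, projk m ''
    Wset m (Complex.exp (2 * Real.pi * φ i * Complex.I)) (ρ i) τ, fun i => ?_, ?_, fun i => ?_⟩
  · exact isOpen_iUnion fun τ =>
      isOpenQuotientMap_projk.isOpenMap _ (isOpen_Wset (h0 i) (h1 i))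
  · refine Set.eq_univ_of_forall fun u => ?_
    obtain ⟨x, rfl⟩ := isOpenQuotientMap_projk.surjective u
    obtain ⟨i, τ, h⟩ := cover_Wset m κ φ hφ ρ hρ h0 h1 x
    exact Set.mem_iUnion.mpr ⟨i, Set.mem_iUnion.mpr ⟨τ, x, h, rfl⟩⟩
  · exact hasSec_iUnion_Wset (h0 i) (h1 i) (Complex.exp_ne_zero _)

end LensTC

/-- For `m ≥ 3` and `k ≥ 2`, `TC_k(L³_m) = 3k`. -/
theorem stmt19 (k m : ℕ) (hk : 2 ≤ k) (hm : 3 ≤ m) :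
    higherTC (LensSpace m 1) k = 3 * k := by
  have : NeZero m := ⟨by omega⟩
  obtain ⟨κ, rfl⟩ := Nat.exists_eq_add_of_le' hk
  have h : 3 * (κ + 2) ∈ {r | TCCoverAt (LensSpace m 1) (κ + 2) r} := LensTC.upper_bound κ m
  exact le_antisymm (Nat.sInf_le h) (LensTC.lower_bound κ m _ hm (Nat.sInf_mem ⟨_, h⟩))
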